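/- There exists a real number M ≥ 1 such that for all x ≥ 8 and y ≥ 2, one has f_a(x,y) ≥ f_a*(x,y) ≥ A(x/M, y, 2). -/

import Mathlib

/-- `Pmax n` is the largest prime factor of `n`, with the convention `Pmax 1 = 1`. -/
def Pmax (n : ℕ) : ℕ := if n ≤ 1 then 1 else n.primeFactors.sup id

/-- The Schinzel–Szekeres function: if `n = p₁ p₂ ⋯ p_Ω` with `p₁ ≥ p₂ ≥ ⋯ ≥ p_Ω` prime,
`SS n = max_{1 ≤ k ≤ Ω} p₁ ⋯ p_{k-1} p_k²`, and `SS 1 = 1`.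
(`Nat.primeFactorsList n` is the *increasing* list of prime factors with multiplicity;
the value produced for the index `j` is the one for `k = Ω - j`.) -/
def SS (n : ℕ) : ℕ :=
  ((List.range n.primeFactorsList.length).map
    (fun j => (n.primeFactorsList.drop j).headI * (n.primeFactorsList.drop j).prod)).foldr max 1

/-- A chain in the divisor graph: a finite sequence of pairwise distinct positive
integers in which any two consecutive terms are adjacent in the divisor graph
(the smaller divides the larger). -/
def IsDivChain (l : List ℕ) : Prop :=
  l.Nodup ∧ (∀ n ∈ l, 0 < n) ∧ l.Chain' (fun a b => a ∣ b ∨ b ∣ a)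

/-- `Axyz x y z = #{n ≥ 1 : n ≤ x, P(n) ≤ y, P⁻(n) > z and S(n) ≤ x}`
(the condition `P⁻(n) > z` is expressed as: every prime factor of `n` exceeds `z`,
which is vacuously true for `n = 1`, matching `P⁻(1) = +∞`). -/
noncomputable def Axyz (x y z : ℝ) : ℕ :=
  {n : ℕ | 1 ≤ n ∧ (n : ℝ) ≤ x ∧ (Pmax n : ℝ) ≤ y ∧
    (∀ p : ℕ, p.Prime → p ∣ n → z < (p : ℝ)) ∧ (SS n : ℝ) ≤ x}.ncard

/-- `faxy x y` is the maximum length of a chain all of whose terms `n` belong to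
`𝒜(x) = {n ≥ 1 : S(n) ≤ x}` and satisfy `n ≤ x` and `P(n) ≤ y`. -/
noncomputable def faxy (x y : ℝ) : ℕ :=
  sSup {L : ℕ | ∃ l : List ℕ, IsDivChain l ∧
    (∀ n ∈ l, 1 ≤ n ∧ (SS n : ℝ) ≤ x ∧ (n : ℝ) ≤ x ∧ (Pmax n : ℝ) ≤ y) ∧ l.length = L}

/-- `faxyStar x y` is the maximum length of a chain all of whose terms `n` belong to
`𝒜(x)` and satisfy `√x < n ≤ x` and `P(n) ≤ y`. -/
noncomputable def faxyStar (x y : ℝ) : ℕ :=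
  sSup {L : ℕ | ∃ l : List ℕ, IsDivChain l ∧
    (∀ n ∈ l, 1 ≤ n ∧ (SS n : ℝ) ≤ x ∧ Real.sqrt x < (n : ℝ) ∧ (n : ℝ) ≤ x ∧
      (Pmax n : ℝ) ≤ y) ∧ l.length = L}


/-- The part of `n` composed of primes `< u`. -/
noncomputable def sm (n u : ℕ) : ℕ := ∏ p ∈ n.primeFactors.filter (· < u), p ^ n.factorization p

/-- All prime factors are at least `u`. -/
def Rough (u s : ℕ) : Prop := ∀ p : ℕ, p.Prime → p ∣ s → u ≤ p

/-- All prime factors are less than `u`. -/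
def Smo (u s : ℕ) : Prop := ∀ p : ℕ, p.Prime → p ∣ s → p < u

lemma sm_pos (n u : ℕ) : 0 < sm n u := by
  unfold sm
  apply Finset.prod_pos
  intro p hp
  have := (Nat.prime_of_mem_primeFactors (Finset.mem_filter.1 hp).1).pos
  positivity

lemma sm_mul_compl (n u : ℕ) (hn : n ≠ 0) :
    (∏ p ∈ n.primeFactors.filter (fun p => ¬ p < u), p ^ n.factorization p) * sm n u = n := by
  unfold sm
  rw [mul_comm, Finset.prod_filter_mul_prod_filter_not]
  exact Nat.prod_factorization_pow_eq_self hn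

lemma sm_smo (n u : ℕ) : Smo u (sm n u) := by
  intro p hp hd
  unfold sm at hd
  rw [Prime.dvd_finset_prod_iff hp.prime] at hd
  obtain ⟨q, hq, hd⟩ := hd
  have h1 := (Finset.mem_filter.1 hq)
  have := (Nat.prime_dvd_prime_iff_eq hp (Nat.prime_of_mem_primeFactors h1.1)).1
    (hp.dvd_of_dvd_pow hd)
  omega

lemma sm_decomp (n u : ℕ) (hn : n ≠ 0) : ∃ a, n = a * sm n u ∧ Rough u a := by
  refine ⟨_, (sm_mul_compl n u hn).symm, ?_⟩
  intro p hp hd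
  rw [Prime.dvd_finset_prod_iff hp.prime] at hd
  obtain ⟨q, hq, hd⟩ := hd
  have h1 := (Finset.mem_filter.1 hq)
  have := (Nat.prime_dvd_prime_iff_eq hp (Nat.prime_of_mem_primeFactors h1.1)).1
    (hp.dvd_of_dvd_pow hd)
  omega

lemma sm_dvd (n u : ℕ) (hn : n ≠ 0) : sm n u ∣ n := by
  obtain ⟨a, ha, -⟩ := sm_decomp n u hn
  exact ⟨a, by rw [mul_comm]; exact ha⟩

lemma rough_smo_coprime {u a b : ℕ} (ha : Rough u a) (hb : Smo u b) : Nat.Coprime a b := by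
  apply Nat.Coprime.symm
  rw [Nat.coprime_iff_gcd_eq_one]
  by_contra h
  obtain ⟨p, hp, hd⟩ := Nat.exists_prime_and_dvd h
  have h1 := ha p hp (hd.trans (Nat.gcd_dvd_right _ _))
  have h2 := hb p hp (hd.trans (Nat.gcd_dvd_left _ _))
  omega

/-- uniqueness -/
lemma decomp_unique {u a b a' b' : ℕ} (h : a * b = a' * b')
    (ha : Rough u a) (hb : Smo u b) (ha' : Rough u a') (hb' : Smo u b') : a = a' ∧ b = b' := by
  constructor
  · apply Nat.dvd_antisymm
    · exact (rough_smo_coprime ha hb').dvd_of_dvd_mul_right (h ▸ Dvd.intro _ rfl)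
    · exact (rough_smo_coprime ha' hb).dvd_of_dvd_mul_right (h ▸ Dvd.intro _ rfl)
  · apply Nat.dvd_antisymm
    · exact (rough_smo_coprime ha' hb).symm.dvd_of_dvd_mul_left (h ▸ Dvd.intro_left _ rfl)
    · exact (rough_smo_coprime ha hb').symm.dvd_of_dvd_mul_left (h ▸ Dvd.intro_left _ rfl)

lemma sm_eq {u a b : ℕ} (h0 : a * b ≠ 0) (ha : Rough u a) (hb : Smo u b) : sm (a * b) u = b := by
  obtain ⟨c, hc, hcr⟩ := sm_decomp (a * b) u h0
  exact (decomp_unique hc ha hb hcr (sm_smo _ _)).2.symm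

lemma Smo.dvd {u a b : ℕ} (h : Smo u b) (hd : a ∣ b) : Smo u a :=
  fun p hp hpa => h p hp (hpa.trans hd)

lemma Rough.dvd {u a b : ℕ} (h : Rough u b) (hd : a ∣ b) : Rough u a :=
  fun p hp hpa => h p hp (hpa.trans hd)

lemma Smo.mul {u a b : ℕ} (ha : Smo u a) (hb : Smo u b) : Smo u (a * b) := by
  intro p hp hd
  rcases (hp.dvd_mul).1 hd with h | h
  · exact ha p hp h
  · exact hb p hp h

lemma Rough.mul {u a b : ℕ} (ha : Rough u a) (hb : Rough u b) : Rough u (a * b) := by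
  intro p hp hd
  rcases (hp.dvd_mul).1 hd with h | h
  · exact ha p hp h
  · exact hb p hp h

lemma Smo.mono {u v a : ℕ} (ha : Smo u a) (h : u ≤ v) : Smo v a :=
  fun p hp hd => (ha p hp hd).trans_le h

lemma Rough.mono {u v a : ℕ} (ha : Rough v a) (h : u ≤ v) : Rough u a :=
  fun p hp hd => h.trans (ha p hp hd)

lemma smo_one (u : ℕ) : Smo u 1 := fun p hp hd => absurd (Nat.dvd_one.1 hd) hp.ne_one
lemma rough_one (u : ℕ) : Rough u 1 := fun p hp hd => absurd (Nat.dvd_one.1 hd) hp.ne_one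

lemma rough_prime {p u : ℕ} (hp : p.Prime) (h : u ≤ p) : Rough u p := by
  intro q hq hd
  rwa [(Nat.prime_dvd_prime_iff_eq hq hp).1 hd]

lemma smo_prime {p u : ℕ} (hp : p.Prime) (h : p < u) : Smo u p := by
  intro q hq hd
  rwa [(Nat.prime_dvd_prime_iff_eq hq hp).1 hd]

/-- a smooth divisor of `n` divides `sm n u` -/
lemma dvd_sm {u d n : ℕ} (hn : n ≠ 0) (hd : d ∣ n) (hs : Smo u d) : d ∣ sm n u := by
  obtain ⟨a, ha, har⟩ := sm_decomp n u hn
  have : d ∣ a * sm n u := ha ▸ hd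
  exact (rough_smo_coprime har hs).symm.dvd_of_dvd_mul_left this

lemma sm_dvd_sm {u a b : ℕ} (hb : b ≠ 0) (h : a ∣ b) : sm a u ∣ sm b u := by
  have ha : a ≠ 0 := fun h0 => hb (by rw [h0] at h; exact Nat.eq_zero_of_zero_dvd h)
  exact dvd_sm hb ((sm_dvd a u ha).trans h) (sm_smo a u)

lemma sm_sm {n u v : ℕ} (hn : n ≠ 0) (h : v ≤ u) : sm (sm n u) v = sm n v := by
  apply Nat.dvd_antisymm
  · exact sm_dvd_sm hn (sm_dvd n u hn)
  · exact dvd_sm (sm_pos n u).ne' (dvd_sm hn (sm_dvd n v hn) ((sm_smo n v).mono h)) (sm_smo n v)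

lemma sm_of_smo {n u : ℕ} (hn : n ≠ 0) (h : Smo u n) : sm n u = n := by
  have := sm_eq (u := u) (a := 1) (b := n) (by simpa using hn) (rough_one u) h
  simpa using this

lemma sm_of_rough {n u : ℕ} (hn : n ≠ 0) (h : Rough u n) : sm n u = 1 := by
  have := sm_eq (u := u) (a := n) (b := 1) (by simpa using hn) h (smo_one u)
  simpa using this

/-- Dense numbers (coprime to `6`, with the seed `243`). -/
def Dns (N : ℕ) : Prop := N ≠ 0 ∧ ∀ q : ℕ, q.Prime → q ∣ N → 5 ≤ q ∧ q < 243 * sm N q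

lemma dns_one : Dns 1 := ⟨one_ne_zero, fun p hp hd => absurd (Nat.dvd_one.1 hd) hp.ne_one⟩

lemma Dns.mul_prime {N p : ℕ} (hN : Dns N) (hp : p.Prime) (h5 : 5 ≤ p) (hlt : p < 243 * N) :
    Dns (N * p) := by
  have h0 : N * p ≠ 0 := mul_ne_zero hN.1 hp.ne_zero
  refine ⟨h0, ?_⟩
  have key : ∀ q : ℕ, q.Prime → q ∣ N → 5 ≤ q ∧ q < 243 * sm (N * p) q := by
    intro q hq hd
    have h1 := hN.2 q hq hd
    have h2 : sm N q ≤ sm (N * p) q :=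
      Nat.le_of_dvd (sm_pos _ _) (sm_dvd_sm h0 (Dvd.intro _ rfl))
    omega
  intro q hq hd
  rcases (hq.dvd_mul).1 hd with h | h
  · exact key q hq h
  · have hqp : q = p := (Nat.prime_dvd_prime_iff_eq hq hp).1 h
    subst hqp
    refine ⟨h5, ?_⟩
    by_cases hs : Smo q N
    · have : sm N q = N := sm_of_smo hN.1 hs
      have h2 : sm N q ≤ sm (N * q) q :=
        Nat.le_of_dvd (sm_pos _ _) (sm_dvd_sm h0 (Dvd.intro _ rfl))
      omega
    · -- smallest prime factor of N that is at least q
      have hex : ∃ l, l.Prime ∧ l ∣ N ∧ q ≤ l := by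
        unfold Smo at hs
        push Not at hs
        obtain ⟨l, a, b, c⟩ := hs
        exact ⟨l, a, b, c⟩
      classical
      obtain ⟨hl, hlN, hql⟩ := Nat.find_spec hex
      set l := Nat.find hex
      have hmin : ∀ l', l' < l → ¬ (l'.Prime ∧ l' ∣ N ∧ q ≤ l') := fun l' h => Nat.find_min hex h
      have h1 := (hN.2 l hl hlN).2
      have h2 : sm N l ∣ sm N q := by
        apply dvd_sm hN.1 (sm_dvd _ _ hN.1)
        intro r hr hrd
        by_contra hcon
        exact hmin r (sm_smo N l r hr hrd) ⟨hr, hrd.trans (sm_dvd _ _ hN.1), not_lt.1 hcon⟩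
      have h3 : sm N l ≤ sm N q := Nat.le_of_dvd (sm_pos _ _) h2
      have h4 : sm N q ≤ sm (N * q) q :=
        Nat.le_of_dvd (sm_pos _ _) (sm_dvd_sm h0 (Dvd.intro _ rfl))
      omega

lemma Dns.mul_of_le {N s : ℕ} (hN : Dns N) (hs : s ≠ 0) (h5 : Rough 5 s) (hle : s ≤ N) :
    Dns (N * s) := by
  induction s using Nat.strong_induction_on generalizing N with
  | _ s ih =>
    by_cases h1 : s = 1
    · subst h1; simpa using hN
    · obtain ⟨p, hp, t, rfl⟩ := Nat.exists_prime_and_dvd h1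
      have ht : t ≠ 0 := by rintro rfl; simp at hs
      have htlt : t < p * t := by
        have := hp.two_le
        nlinarith [Nat.pos_of_ne_zero ht]
      have hple : p ≤ p * t := Nat.le_mul_of_pos_right p (Nat.pos_of_ne_zero ht)
      have hNp : Dns (N * p) := hN.mul_prime hp (h5 p hp (Dvd.intro _ rfl))
        (by have := Nat.pos_of_ne_zero hN.1; omega)
      have := ih t htlt hNp ht (h5.dvd (Dvd.intro_left _ rfl))
        (by have := Nat.le_mul_of_pos_right N hp.pos; omega)
      rwa [mul_assoc] at this

open Finset in
/-- sum of `log p / (p-1)` over primes `5 ≤ p < u`. -/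
noncomputable def Lsum (u : ℕ) : ℝ :=
  ∑ p ∈ (range u).filter (fun p => p.Prime ∧ 5 ≤ p), Real.log p / ((p : ℝ) - 1)

open Finset in
/-- product of `1 - 1/p` over primes `p < u`. -/
noncomputable def rho (u : ℕ) : ℝ :=
  ∏ p ∈ (range u).filter (fun p => p.Prime), (1 - 1 / (p : ℝ))

open Finset in
/-- the sum of reciprocals of dense numbers reachable from state `(r,u)`. -/
noncomputable def bsum (W Z r u : ℕ) : ℝ := by
  classical
  exact ∑ N ∈ (Icc 1 Z).filter (fun N => Dns N ∧ W ≤ N ∧ r ∣ N ∧ Rough u (N / r)), 1 / (N : ℝ)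

lemma log_factorial_ge (n : ℕ) : (n : ℝ) * Real.log n - n ≤ Real.log (n.factorial : ℝ) := by
  rcases Nat.eq_zero_or_pos n with rfl | hn
  · simp
  have h := Real.pow_div_factorial_le_exp (n : ℝ) (by positivity) n
  have hn' : (0 : ℝ) < n := by exact_mod_cast hn
  have hf : (0 : ℝ) < n.factorial := by exact_mod_cast n.factorial_pos
  have h2 := Real.log_le_log (by positivity) h
  rw [Real.log_exp, Real.log_div (by positivity) (by positivity), Real.log_pow] at h2
  linarith

open Finset in
lemma log_factorial_le (n : ℕ) : Real.log (n.factorial : ℝ) ≤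
    n * ∑ p ∈ (range (n + 1)).filter (fun p => p.Prime), Real.log p / ((p : ℝ) - 1) := by
  have h0 : n.factorial ≠ 0 := n.factorial_ne_zero
  have h1 := Nat.prod_factorization_pow_eq_self h0
  have h2 : Real.log (n.factorial : ℝ) =
      ∑ p ∈ n.factorial.primeFactors, (n.factorial.factorization p : ℝ) * Real.log p := by
    conv_lhs => rw [← h1]
    rw [Finsupp.prod, Nat.support_factorization, Nat.cast_prod, Real.log_prod]
    · apply sum_congr rfl
      intro p _
      rw [Nat.cast_pow, Real.log_pow]
    · intro p hp
      have := (Nat.prime_of_mem_primeFactors hp).pos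
      positivity
  rw [h2, mul_sum]
  have hsub : n.factorial.primeFactors ⊆ (range (n + 1)).filter (fun p => p.Prime) := by
    intro p hp
    have hpp := Nat.prime_of_mem_primeFactors hp
    have := (hpp.dvd_factorial).1 (Nat.dvd_of_mem_primeFactors hp)
    simp only [mem_filter, mem_range]
    exact ⟨by omega, hpp⟩
  refine (sum_le_sum ?_).trans (sum_le_sum_of_subset_of_nonneg hsub ?_)
  · intro p hp
    have hpp := Nat.prime_of_mem_primeFactors hp
    haveI : Fact p.Prime := ⟨hpp⟩
    have hl := sub_one_mul_padicValNat_factorial (p := p) n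
    have hle : (p - 1) * n.factorial.factorization p ≤ n := by
      rw [Nat.factorization_def _ hpp, hl]; omega
    have hp1 : (1 : ℝ) < p := by exact_mod_cast hpp.one_lt
    have hle' : ((p : ℝ) - 1) * n.factorial.factorization p ≤ n := by
      have : (((p - 1) * n.factorial.factorization p : ℕ) : ℝ) ≤ n := by exact_mod_cast hle
      rwa [Nat.cast_mul, Nat.cast_sub hpp.one_lt.le, Nat.cast_one] at this
    have hlog : 0 ≤ Real.log p := Real.log_nonneg hp1.le
    rw [← mul_div_assoc, le_div_iff₀ (by linarith)]
    nlinarith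
  · intro p hp _
    have hpp := (mem_filter.1 hp).2
    have hp1 : (1 : ℝ) < p := by exact_mod_cast hpp.one_lt
    have hlog : 0 ≤ Real.log p := Real.log_nonneg hp1.le
    have : 0 < (p : ℝ) - 1 := by linarith
    positivity

open Finset in
lemma Lsum_ge (u : ℕ) (hu : 5 ≤ u) : Real.log u - 4 ≤ Lsum u := by
  obtain ⟨n, rfl⟩ : ∃ n, u = n + 1 := ⟨u - 1, by omega⟩
  have h1 := log_factorial_ge n
  have h2 := log_factorial_le n
  have hn : (4 : ℝ) ≤ n := by
    have : 4 ≤ n := by omega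
    exact_mod_cast this
  have h3 : Real.log n - 1 ≤
      ∑ p ∈ (range (n + 1)).filter (fun p => p.Prime), Real.log p / ((p : ℝ) - 1) := by
    have : (n : ℝ) * (Real.log n - 1) ≤ n * ∑ p ∈ (range (n + 1)).filter (fun p => p.Prime),
        Real.log p / ((p : ℝ) - 1) := by linarith
    exact le_of_mul_le_mul_left this (by linarith)
  have h4 : (range (n + 1)).filter (fun p => p.Prime) =
      insert 2 (insert 3 ((range (n + 1)).filter (fun p => p.Prime ∧ 5 ≤ p))) := by
    ext p
    simp only [mem_filter, mem_range, mem_insert]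
    constructor
    · rintro ⟨a, b⟩
      by_cases h5 : 5 ≤ p
      · right; right; exact ⟨a, b, h5⟩
      · have := b.two_le
        have : p ≠ 4 := by rintro rfl; revert b; decide
        omega
    · rintro (rfl | rfl | ⟨a, b, c⟩)
      · exact ⟨by omega, by decide⟩
      · exact ⟨by omega, by decide⟩
      · exact ⟨a, b⟩
  rw [h4, sum_insert (by simp), sum_insert (by simp)] at h3
  have h5 : Real.log ((n + 1 : ℕ) : ℝ) ≤ Real.log n + Real.log 2 := by
    rw [← Real.log_mul (by linarith) (by norm_num)]
    apply Real.log_le_log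
    · positivity
    · push_cast; linarith
  have l2 := Real.log_two_lt_d9
  have l3 : Real.log 3 ≤ 2 * Real.log 2 := by
    have : (2 : ℝ) * Real.log 2 = Real.log 4 := by
      rw [show (4 : ℝ) = 2 ^ 2 by norm_num, Real.log_pow]; norm_num
    rw [this]
    exact Real.log_le_log (by norm_num) (by norm_num)
  unfold Lsum
  norm_num at h3
  push_cast at h5 ⊢
  linarith

lemma rho_pos (u : ℕ) : 0 < rho u := by
  unfold rho
  apply Finset.prod_pos
  intro p hp
  have : (1 : ℝ) < p := by exact_mod_cast (Finset.mem_filter.1 hp).2.one_lt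
  have h : 1 / (p : ℝ) < 1 := by
    rw [div_lt_one (by linarith)]; exact this
  linarith

lemma rho_succ_prime {u : ℕ} (h : u.Prime) : rho (u + 1) = rho u * (1 - 1 / (u : ℝ)) := by
  unfold rho
  rw [Finset.range_add_one, Finset.filter_insert, if_pos h, Finset.prod_insert (by simp), mul_comm]

lemma rho_succ_not_prime {u : ℕ} (h : ¬ u.Prime) : rho (u + 1) = rho u := by
  unfold rho
  rw [Finset.range_add_one, Finset.filter_insert, if_neg h]

lemma Lsum_succ_prime {u : ℕ} (h : u.Prime) (h5 : 5 ≤ u) :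
    Lsum (u + 1) = Lsum u + Real.log u / ((u : ℝ) - 1) := by
  unfold Lsum
  rw [Finset.range_add_one, Finset.filter_insert, if_pos ⟨h, h5⟩, Finset.sum_insert (by simp), add_comm]

lemma Lsum_succ_not_prime {u : ℕ} (h : ¬ u.Prime) : Lsum (u + 1) = Lsum u := by
  unfold Lsum
  rw [Finset.range_add_one, Finset.filter_insert, if_neg (by tauto)]

lemma Lsum_nonneg (u : ℕ) : 0 ≤ Lsum u := by
  unfold Lsum
  apply Finset.sum_nonneg
  intro p hp
  have hp1 : (1 : ℝ) < p := by exact_mod_cast (Finset.mem_filter.1 hp).2.1.one_lt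
  have hlog : 0 ≤ Real.log p := Real.log_nonneg hp1.le
  have : 0 < (p : ℝ) - 1 := by linarith
  positivity

lemma rough_succ_of_not_prime {u s : ℕ} (hu : ¬ u.Prime) (h : Rough u s) : Rough (u + 1) s := by
  intro p hp hd
  have h1 := h p hp hd
  have : p ≠ u := by rintro rfl; exact hu hp
  omega

lemma rough_succ_of_not_dvd {u s : ℕ} (hu : ¬ u ∣ s) (h : Rough u s) : Rough (u + 1) s := by
  intro p hp hd
  have h1 := h p hp hd
  have : p ≠ u := by rintro rfl; exact hu hd
  omega

open Finset Classical in
lemma rough_sum_ge (V u : ℕ) :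
    rho u * Real.log V ≤ ∑ s ∈ (Icc 1 V).filter (fun s => Rough u s), 1 / (s : ℝ) := by
  induction u with
  | zero =>
    have h1 : (Icc 1 V).filter (fun s => Rough 0 s) = Icc 1 V := by
      apply filter_true_of_mem
      intro s _ p _ _
      omega
    rw [h1]
    have h2 : rho 0 = 1 := by simp [rho]
    rw [h2, one_mul]
    rcases Nat.eq_zero_or_pos V with rfl | hV
    · simp
    have h3 := log_add_one_le_harmonic V
    rw [harmonic_eq_sum_Icc] at h3
    push_cast at h3
    have h4 : Real.log V ≤ Real.log (V + 1) := by
      apply Real.log_le_log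
      · exact_mod_cast hV
      · linarith
    simp only [one_div]
    linarith
  | succ u ih =>
    by_cases hu : u.Prime
    · rw [rho_succ_prime hu]
      have hu1 : (1 : ℝ) < u := by exact_mod_cast hu.one_lt
      set S := ∑ s ∈ (Icc 1 V).filter (fun s => Rough u s), 1 / (s : ℝ) with hS
      have hsplit : S ≤ ∑ s ∈ (Icc 1 V).filter (fun s => Rough (u + 1) s), 1 / (s : ℝ) + 1 / u * S := by
        have h1 : S = ∑ s ∈ ((Icc 1 V).filter (fun s => Rough u s)).filter (fun s => ¬ u ∣ s), 1 / (s : ℝ)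
            + ∑ s ∈ ((Icc 1 V).filter (fun s => Rough u s)).filter (fun s => ¬ ¬ u ∣ s), 1 / (s : ℝ) := by
          rw [hS]; exact (sum_filter_add_sum_filter_not _ _ _).symm
        rw [h1]
        apply add_le_add
        · apply sum_le_sum_of_subset_of_nonneg
          · intro s hs
            simp only [mem_filter] at hs ⊢
            exact ⟨hs.1.1, rough_succ_of_not_dvd hs.2 hs.1.2⟩
          · intros; positivity
        · rw [← h1, hS, mul_sum]
          have hinj : Set.InjOn (fun s : ℕ => u * s) ((Icc 1 V).filter (fun s => Rough u s) : Finset ℕ) := by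
            intro a _ b _ hab
            exact Nat.eq_of_mul_eq_mul_left hu.pos hab
          have h2 : ∑ s ∈ (Icc 1 V).filter (fun s => Rough u s), 1 / (u : ℝ) * (1 / (s : ℝ)) =
              ∑ s ∈ ((Icc 1 V).filter (fun s => Rough u s)).image (fun s => u * s), 1 / (s : ℝ) := by
            rw [sum_image hinj]
            apply sum_congr rfl
            intro s _
            push_cast
            rw [div_mul_div_comm, one_mul]
          rw [h2]
          apply sum_le_sum_of_subset_of_nonneg
          · intro s hs
            simp only [mem_filter, not_not, mem_Icc, mem_image] at hs ⊢
            obtain ⟨⟨⟨hs1, hs2⟩, hs3⟩, t, rfl⟩ := hs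
            have ht : 0 < t := Nat.pos_of_ne_zero (by rintro rfl; simp at hs1)
            exact ⟨t, ⟨⟨ht, by nlinarith [hu.pos]⟩, hs3.dvd (Dvd.intro_left _ rfl)⟩, rfl⟩
          · intros; positivity
      have h5 : (1 - 1 / (u : ℝ)) * (rho u * Real.log V) ≤ (1 - 1 / (u : ℝ)) * S := by
        apply mul_le_mul_of_nonneg_left ih
        have h : 1 / (u : ℝ) ≤ 1 := by
          rw [div_le_one (by linarith)]; exact hu1.le
        linarith
      nlinarith
    · rw [rho_succ_not_prime hu]
      refine ih.trans ?_
      apply sum_le_sum_of_subset_of_nonneg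
      · intro s hs
        simp only [mem_filter] at hs ⊢
        exact ⟨hs.1, rough_succ_of_not_prime hu hs.2⟩
      · intros; positivity

lemma bsum_nonneg (W Z r u : ℕ) : 0 ≤ bsum W Z r u := by
  unfold bsum
  apply Finset.sum_nonneg
  intros; positivity

lemma log243 : (5 : ℝ) ≤ Real.log 243 := by
  rw [Real.le_log_iff_exp_le (by norm_num)]
  have h := Real.exp_one_lt_d9
  have : Real.exp 5 = Real.exp 1 ^ 5 := by
    rw [← Real.exp_nat_mul]; norm_num
  rw [this]
  have h0 := Real.exp_pos 1
  calc Real.exp 1 ^ 5 ≤ (2.7182818286 : ℝ) ^ 5 := by gcongr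
    _ ≤ 243 := by norm_num

open Finset Classical in
lemma potential (W V Z : ℕ) (hV : 1 ≤ V) (hVW : V ≤ W) (hZ : 243 * W ^ 2 * V ≤ Z) (k : ℕ) :
    ∀ r u : ℕ, (243 * W ^ 2 + 1 - r) + (243 * W + 1 - u) ≤ k → Dns r → Smo (u + 1) r → 5 ≤ u →
      r ≤ 243 * W ^ 2 →
      rho u / r * (Real.log V / (Real.log (243 * W ^ 2) + 1)) * (Real.log r - Lsum u + 1)
        ≤ bsum W Z r u := by
  have hW1 : 1 ≤ W := hV.trans hVW
  have hW1' : (1 : ℝ) ≤ W := by exact_mod_cast hW1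
  have hV1' : (1 : ℝ) ≤ V := by exact_mod_cast hV
  have hL : 0 ≤ Real.log (243 * (W : ℝ) ^ 2) := Real.log_nonneg (by nlinarith)
  have hlV : 0 ≤ Real.log V := Real.log_nonneg hV1'
  induction k with
  | zero =>
    intro r u hk _ _ _ hr
    exfalso
    omega
  | succ k ih =>
    intro r u hk hD hS h5 hr
    have hr0 : 0 < r := Nat.pos_of_ne_zero hD.1
    have hr0' : (0 : ℝ) < r := by exact_mod_cast hr0
    have hr1' : (1 : ℝ) ≤ r := by exact_mod_cast hr0
    have hrho := rho_pos u
    by_cases hWr : W ≤ r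
    · -- success
      have h1 : Real.log r - Lsum u + 1 ≤ Real.log (243 * (W : ℝ) ^ 2) + 1 := by
        have := Lsum_nonneg u
        have h2 : Real.log r ≤ Real.log (243 * (W : ℝ) ^ 2) := by
          apply Real.log_le_log hr0'
          exact_mod_cast hr
        linarith
      have h2 : rho u / r * (Real.log V / (Real.log (243 * W ^ 2) + 1)) * (Real.log r - Lsum u + 1)
          ≤ rho u / r * Real.log V := by
        have : rho u / r * (Real.log V / (Real.log (243 * W ^ 2) + 1)) * (Real.log r - Lsum u + 1)
            ≤ rho u / r * (Real.log V / (Real.log (243 * W ^ 2) + 1)) *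
              (Real.log (243 * (W : ℝ) ^ 2) + 1) := by
          apply mul_le_mul_of_nonneg_left h1
          positivity
        refine this.trans (le_of_eq ?_)
        field_simp
      refine h2.trans ?_
      have h3 := rough_sum_ge V u
      have h4 : rho u / r * Real.log V ≤
          ∑ s ∈ (Icc 1 V).filter (fun s => Rough u s), 1 / ((r * s : ℕ) : ℝ) := by
        have : ∑ s ∈ (Icc 1 V).filter (fun s => Rough u s), 1 / ((r * s : ℕ) : ℝ) =
            1 / r * ∑ s ∈ (Icc 1 V).filter (fun s => Rough u s), 1 / (s : ℝ) := by
          rw [mul_sum]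
          apply sum_congr rfl
          intro s _
          push_cast
          rw [div_mul_div_comm, one_mul]
        rw [this, div_mul_eq_mul_div, div_eq_mul_one_div, mul_comm]
        gcongr
      refine h4.trans ?_
      have hinj : Set.InjOn (fun s : ℕ => r * s) ((Icc 1 V).filter (fun s => Rough u s) : Finset ℕ) := by
        intro a _ b _ hab
        exact Nat.eq_of_mul_eq_mul_left hr0 hab
      rw [← sum_image (f := fun n : ℕ => 1 / (n : ℝ)) hinj]
      unfold bsum
      apply sum_le_sum_of_subset_of_nonneg
      · intro n hn
        simp only [mem_filter, mem_image, mem_Icc] at hn ⊢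
        obtain ⟨s, ⟨⟨hs1, hs2⟩, hs3⟩, rfl⟩ := hn
        refine ⟨⟨Nat.mul_pos hr0 hs1, ?_⟩, ?_, ?_, Dvd.intro _ rfl, ?_⟩
        · calc r * s ≤ 243 * W ^ 2 * V := Nat.mul_le_mul hr hs2
            _ ≤ Z := hZ
        · exact hD.mul_of_le (by omega) (hs3.mono h5) (by omega)
        · exact hWr.trans (Nat.le_mul_of_pos_right r hs1)
        · rwa [Nat.mul_div_cancel_left _ hr0]
      · intros; positivity
    push Not at hWr
    by_cases hf : 243 * r ≤ u
    · -- failure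
      have h1 := Lsum_ge u h5
      have h2 : Real.log 243 + Real.log r ≤ Real.log u := by
        rw [← Real.log_mul (by norm_num) hr0'.ne']
        apply Real.log_le_log (by positivity)
        exact_mod_cast hf
      have h3 := log243
      refine le_trans ?_ (bsum_nonneg W Z r u)
      apply mul_nonpos_of_nonneg_of_nonpos
      · positivity
      · linarith
    push Not at hf
    have huW : u < 243 * W := by omega
    have hrW : r ≤ 243 * W ^ 2 := hr
    by_cases hu : u.Prime
    · have hDu : Dns (r * u) := hD.mul_prime hu h5 hf
      have hru : r * u ≤ 243 * W ^ 2 := by nlinarith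
      have hru2 : r < r * u := by nlinarith
      have ih1 := ih r (u + 1) (by omega) hD (hS.mono (by omega)) (by omega) hr
      have ih2 := ih (r * u) u (by omega) hDu (hS.mul (smo_prime hu (by omega))) h5 hru
      have hsplit : bsum W Z r (u + 1) + bsum W Z (r * u) u ≤ bsum W Z r u := by
        unfold bsum
        rw [← sum_union]
        · apply sum_le_sum_of_subset_of_nonneg
          · intro n hn
            simp only [mem_union, mem_filter, mem_Icc] at hn ⊢
            rcases hn with ⟨a, b, c, d, e⟩ | ⟨a, b, c, d, e⟩
            · exact ⟨a, b, c, d, e.mono (by omega)⟩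
            · refine ⟨a, b, c, (Dvd.intro _ rfl : r ∣ r * u).trans d, ?_⟩
              obtain ⟨t, rfl⟩ := d
              rw [Nat.mul_div_cancel_left _ (by positivity)] at e
              rw [mul_assoc, Nat.mul_div_cancel_left _ hr0]
              exact (rough_prime hu le_rfl).mul e
          · intros; positivity
        · rw [disjoint_left]
          intro n h1 h2
          simp only [mem_filter, mem_Icc] at h1 h2
          obtain ⟨t, ht⟩ := h2.2.2.2.1
          have := h1.2.2.2.2 u hu (by
            rw [ht, mul_assoc, Nat.mul_div_cancel_left _ hr0]; exact Dvd.intro _ rfl)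
          omega
      refine le_trans ?_ hsplit
      refine le_trans (le_of_eq ?_) (add_le_add ih1 ih2)
      have hu1 : (1 : ℝ) < u := by exact_mod_cast hu.one_lt
      have hu0 : (u : ℝ) - 1 ≠ 0 := by linarith
      have hu0' : (u : ℝ) ≠ 0 := by linarith
      rw [rho_succ_prime hu, Lsum_succ_prime hu h5]
      push_cast
      rw [Real.log_mul hr0'.ne' hu0']
      have hLL : Real.log (243 * (W : ℝ) ^ 2) + 1 ≠ 0 := by linarith
      field_simp
      ring
    · have ih1 := ih r (u + 1) (by omega) hD (hS.mono (by omega)) (by omega) hr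
      rw [rho_succ_not_prime hu, Lsum_succ_not_prime hu] at ih1
      refine ih1.trans ?_
      unfold bsum
      apply sum_le_sum_of_subset_of_nonneg
      · intro n hn
        simp only [mem_filter, mem_Icc] at hn ⊢
        obtain ⟨a, b, c, d, e⟩ := hn
        exact ⟨a, b, c, d, e.mono (by omega)⟩
      · intros; positivity

open Finset Classical in
/-- log-mass of dense numbers. -/
lemma dense_mass (W V : ℕ) (hV : 1 ≤ V) (hVW : V ≤ W) :
    1 / 3 * (Real.log V / (Real.log (243 * W ^ 2) + 1)) ≤
      ∑ N ∈ (Icc W (243 * W ^ 2 * V)).filter (fun N => Dns N), 1 / (N : ℝ) := by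
  have h := potential W V (243 * W ^ 2 * V) hV hVW le_rfl _ 1 5 le_rfl dns_one (smo_one _) le_rfl
    (by nlinarith [hV.trans hVW])
  have hr : rho 5 = 1 / 3 := by
    have : (range 5).filter (fun p => p.Prime) = {2, 3} := by decide
    unfold rho
    rw [this]; norm_num
  have hl : Lsum 5 = 0 := by
    have : (range 5).filter (fun p => p.Prime ∧ 5 ≤ p) = ∅ := by decide
    unfold Lsum
    rw [this]; simp
  rw [hr, hl] at h
  simp only [Nat.cast_one, Real.log_one, sub_zero, zero_add, mul_one, div_one] at h
  refine h.trans ?_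
  unfold bsum
  apply sum_le_sum_of_subset_of_nonneg
  · intro n hn
    simp only [mem_filter, mem_Icc] at hn ⊢
    exact ⟨⟨hn.2.2.1, hn.1.2⟩, hn.2.1⟩
  · intros; positivity


open Finset Classical in
/-- primes in `(t/4, t]` -/
noncomputable def pb (t : ℝ) : Finset ℕ := (Ioc 0 ⌊t⌋₊).filter (fun p => p.Prime ∧ t / 4 < p)

lemma mem_pb {t : ℝ} (ht : 0 ≤ t) {p : ℕ} : p ∈ pb t ↔ p.Prime ∧ t / 4 < p ∧ (p : ℝ) ≤ t := by
  unfold pb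
  simp only [Finset.mem_filter, Finset.mem_Ioc, Nat.le_floor_iff ht]
  constructor
  · rintro ⟨⟨a, b⟩, c, d⟩; exact ⟨c, d, b⟩
  · rintro ⟨a, b, c⟩; exact ⟨⟨a.pos, c⟩, a, b⟩

open Finset Classical in
lemma theta_sub_le (t : ℝ) (ht : 1 ≤ t) :
    Chebyshev.theta t - Chebyshev.theta (t / 4) ≤ (pb t).card * Real.log t := by
  have h1 : Chebyshev.theta t ≤ Chebyshev.theta (t / 4) + ∑ p ∈ pb t, Real.log p := by
    unfold Chebyshev.theta
    rw [← sum_union]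
    · apply sum_le_sum_of_subset_of_nonneg
      · intro p hp
        simp only [mem_filter, mem_Ioc, mem_union, mem_pb (by linarith : (0:ℝ) ≤ t),
          Nat.le_floor_iff (by linarith : (0:ℝ) ≤ t),
          Nat.le_floor_iff (by linarith : (0:ℝ) ≤ t / 4)] at hp ⊢
        by_cases h : (p : ℝ) ≤ t / 4
        · left; exact ⟨⟨hp.1.1, h⟩, hp.2⟩
        · right; exact ⟨hp.2, not_le.1 h, hp.1.2⟩
      · intro p hp _
        exact Real.log_natCast_nonneg p
    · rw [disjoint_left]
      intro p hp hp'
      simp only [mem_filter, mem_Ioc, mem_pb (by linarith : (0:ℝ) ≤ t),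
          Nat.le_floor_iff (by linarith : (0:ℝ) ≤ t / 4)] at hp hp'
      linarith [hp.1.2, hp'.2.1]
  have h2 : ∑ p ∈ pb t, Real.log p ≤ (pb t).card * Real.log t := by
    rw [← nsmul_eq_mul]
    apply sum_le_card_nsmul
    intro p hp
    rw [mem_pb (by linarith)] at hp
    exact Real.log_le_log (by exact_mod_cast hp.1.pos) hp.2.2
  linarith

lemma pb_card : ∃ z1 : ℝ, 2 ≤ z1 ∧ ∀ t : ℝ, z1 ≤ t → t / 8 ≤ (pb t).card * Real.log t := by
  have h1 : (fun t : ℝ => Real.sqrt t * Real.log t) =o[Filter.atTop] (fun t : ℝ => t) := by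
    have h := isLittleO_log_rpow_atTop (show (0:ℝ) < 1/2 by norm_num)
    have h' := (Asymptotics.isBigO_refl (fun t : ℝ => Real.sqrt t) Filter.atTop).mul_isLittleO h
    refine h'.congr' (Filter.EventuallyEq.refl _ _) ?_
    filter_upwards [Filter.eventually_ge_atTop 0] with t ht
    rw [← Real.sqrt_eq_rpow, Real.mul_self_sqrt ht]
  have h3 := h1.bound (show (0:ℝ) < 1/200 by norm_num)
  have h4 := Real.isLittleO_log_id_atTop.bound (show (0:ℝ) < 1/200 by norm_num)
  obtain ⟨z, hz⟩ := Filter.eventually_atTop.1 (h3.and h4)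
  refine ⟨max z 200, le_trans (by norm_num) (le_max_right _ _), fun t ht => ?_⟩
  have hz1 : z ≤ t := (le_max_left _ _).trans ht
  have hz2 : 200 ≤ t := (le_max_right _ _).trans ht
  obtain ⟨h5, h6⟩ := hz t hz1
  simp only [Real.norm_eq_abs, id] at h5 h6
  rw [abs_of_pos (by linarith : 0 < t)] at h5 h6
  have h5' := (le_abs_self _).trans h5
  have h6' := (le_abs_self _).trans h6
  have a1 := Chebyshev.theta_ge' (show 1 ≤ t by linarith)
  have a2 := Chebyshev.theta_le_log4_mul_x (show 0 ≤ t / 4 by linarith)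
  have a3 := theta_sub_le t (by linarith)
  have a4 : Real.log (t + 2) ≤ Real.log t + Real.log 2 := by
    rw [← Real.log_mul (by linarith) (by norm_num)]
    exact Real.log_le_log (by linarith) (by linarith)
  have a5 : Real.log 4 = 2 * Real.log 2 := by
    rw [show (4:ℝ) = 2^2 by norm_num, Real.log_pow]; norm_num
  have a6 := Real.log_two_gt_d9
  have a7 := Real.log_two_lt_d9
  rw [a5] at a2
  nlinarith

open Finset Classical in
/-- reciprocal sum over primes in `(4^(5e), 4^(6e)]` -/
lemma recip_sum : ∃ e0 : ℕ, 1 ≤ e0 ∧ ∀ e : ℕ, e0 ≤ e →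
    1 / (48 * Real.log 4) ≤
      ∑ p ∈ (Ioc (4 ^ (5 * e)) (4 ^ (6 * e))).filter Nat.Prime, 1 / (p : ℝ) := by
  obtain ⟨z1, hz1, hpb⟩ := pb_card
  obtain ⟨e0, he0⟩ := pow_unbounded_of_one_lt z1 (show (1:ℝ) < 4 by norm_num)
  have hlog4 : 0 < Real.log 4 := Real.log_pos (by norm_num)
  refine ⟨e0 + 1, by omega, fun e he => ?_⟩
  have hblock : ∀ j : ℕ, e ≤ j → j < 6 * e →
      1 / (48 * e * Real.log 4) ≤ ∑ p ∈ (Ioc (4 ^ j) (4 ^ (j + 1))).filter Nat.Prime, 1 / (p : ℝ) := by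
    intro j hj hj'
    have ht : z1 ≤ (4:ℝ) ^ (j + 1) := he0.le.trans (pow_le_pow_right₀ (by norm_num) (by omega))
    have h1 := hpb _ ht
    have hsub : pb ((4:ℝ) ^ (j + 1)) = (Ioc (4 ^ j) (4 ^ (j + 1))).filter Nat.Prime := by
      ext p
      rw [mem_pb (by positivity)]
      simp only [mem_filter, mem_Ioc]
      have e1 : (4:ℝ) ^ (j+1) / 4 = 4 ^ j := by rw [pow_succ]; field_simp
      rw [e1]
      have e2 : (4:ℝ) ^ j < p ↔ 4 ^ j < p := by exact_mod_cast Iff.rfl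
      have e3 : (p:ℝ) ≤ (4:ℝ) ^ (j+1) ↔ p ≤ 4 ^ (j+1) := by exact_mod_cast Iff.rfl
      rw [e2, e3]; tauto
    rw [hsub] at h1
    have h2 : ((((Ioc (4 ^ j) (4 ^ (j + 1))).filter Nat.Prime).card : ℕ) : ℝ) * (1 / 4 ^ (j+1)) ≤
        ∑ p ∈ (Ioc (4 ^ j) (4 ^ (j + 1))).filter Nat.Prime, 1 / (p : ℝ) := by
      rw [← nsmul_eq_mul]
      apply card_nsmul_le_sum
      intro p hp
      simp only [mem_filter, mem_Ioc] at hp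
      apply one_div_le_one_div_of_le
      · exact_mod_cast hp.2.pos
      · exact_mod_cast hp.1.2
    refine le_trans ?_ h2
    rw [Real.log_pow] at h1
    have hj6 : ((j + 1 : ℕ) : ℝ) ≤ 6 * e := by exact_mod_cast hj'
    set C : ℝ := ((((Ioc (4 ^ j) (4 ^ (j + 1))).filter Nat.Prime).card : ℕ) : ℝ)
    have hC : 0 ≤ C := by positivity
    have he : (0:ℝ) < e := by
      have : 0 < e := by omega
      exact_mod_cast this
    rw [mul_one_div, div_le_div_iff₀ (by positivity) (by positivity)]
    have : C * (((j+1:ℕ):ℝ) * Real.log 4) ≤ C * (6 * e * Real.log 4) := by gcongr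
    nlinarith
  have hind : ∀ k : ℕ, k ≤ e → (k : ℝ) * (1 / (48 * e * Real.log 4)) ≤
      ∑ p ∈ (Ioc (4 ^ (5 * e)) (4 ^ (5 * e + k))).filter Nat.Prime, 1 / (p : ℝ) := by
    intro k
    induction k with
    | zero => intro _; simp
    | succ k ih =>
      intro hk
      have h1 := ih (by omega)
      have h2 := hblock (5 * e + k) (by omega) (by omega)
      have hs : (Ioc (4 ^ (5 * e)) (4 ^ (5 * e + (k+1)))).filter Nat.Prime =
          (Ioc (4 ^ (5 * e)) (4 ^ (5 * e + k))).filter Nat.Prime ∪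
          (Ioc (4 ^ (5 * e + k)) (4 ^ (5 * e + k + 1))).filter Nat.Prime := by
        rw [← filter_union, Ioc_union_Ioc_eq_Ioc]
        · rfl
        · exact Nat.pow_le_pow_right (by norm_num) (by omega)
        · exact Nat.pow_le_pow_right (by norm_num) (by omega)
      rw [hs, sum_union]
      · push_cast; linarith
      · apply disjoint_filter_filter
        rw [disjoint_left]; intro a ha hb
        simp only [mem_Ioc] at ha hb; omega
  have h := hind e le_rfl
  have he' : (0:ℝ) < e := by
    have : 0 < e := by omega
    exact_mod_cast this
  rw [show 5 * e + e = 6 * e by ring] at h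
  refine le_trans (le_of_eq ?_) h
  field_simp

lemma pi_block : ∃ (C : ℝ), 0 < C ∧ ∀ i : ℕ, 1 ≤ i →
    (((Finset.Ioc (4 ^ i) (4 ^ (i + 1))).filter Nat.Prime).card : ℝ) ≤ C * (4:ℝ) ^ i / i := by
  refine ⟨4 * Real.log 4 / Real.log 2, by
    have := Real.log_pos (show (1:ℝ) < 4 by norm_num)
    have := Real.log_pos (show (1:ℝ) < 2 by norm_num)
    positivity, fun i hi => ?_⟩
  -- each prime in the block contributes at least `i log 4` to theta
  have hlog4 : 0 < Real.log 4 := Real.log_pos (by norm_num)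
  have hi' : (0:ℝ) < i := by exact_mod_cast hi
  have h1 := Chebyshev.theta_le_log4_mul_x (show (0:ℝ) ≤ 4 ^ (i+1) by positivity)
  have h2 : (((Finset.Ioc (4 ^ i) (4 ^ (i + 1))).filter Nat.Prime).card : ℝ) * (i * Real.log 4) ≤
      Chebyshev.theta (4 ^ (i+1)) := by
    unfold Chebyshev.theta
    have hf : ⌊((4:ℝ) ^ (i+1))⌋₊ = 4 ^ (i+1) := by
      have : ((4:ℝ) ^ (i+1)) = ((4 ^ (i+1) : ℕ) : ℝ) := by push_cast; rfl
      rw [this, Nat.floor_natCast]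
    rw [hf]
    calc _ = ((Finset.Ioc (4 ^ i) (4 ^ (i + 1))).filter Nat.Prime).card • ((i:ℝ) * Real.log 4) := by
            rw [nsmul_eq_mul]
      _ ≤ ∑ p ∈ (Finset.Ioc (4 ^ i) (4 ^ (i + 1))).filter Nat.Prime, Real.log p := by
            apply Finset.card_nsmul_le_sum
            intro p hp
            simp only [Finset.mem_filter, Finset.mem_Ioc] at hp
            rw [← Real.log_pow]
            apply Real.log_le_log (by positivity)
            exact_mod_cast hp.1.1.le
      _ ≤ _ := by
            apply Finset.sum_le_sum_of_subset_of_nonneg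
            · intro p hp
              simp only [Finset.mem_filter, Finset.mem_Ioc] at hp ⊢
              exact ⟨⟨hp.2.pos, hp.1.2⟩, hp.2⟩
            · intro p _ _; exact Real.log_natCast_nonneg p
  have h3 := h2.trans h1
  have a5 : Real.log 4 = 2 * Real.log 2 := by
    rw [show (4:ℝ) = 2^2 by norm_num, Real.log_pow]; norm_num
  have hl2 : 0 < Real.log 2 := Real.log_pos (by norm_num)
  set c := (((Finset.Ioc (4 ^ i) (4 ^ (i + 1))).filter Nat.Prime).card : ℝ)
  have h4 : c * i ≤ 4 ^ (i+1) := by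
    by_contra hcon
    push Not at hcon
    nlinarith
  rw [le_div_iff₀ hi', a5]
  have : 4 * (2 * Real.log 2) / Real.log 2 = 8 := by field_simp; norm_num
  rw [this]
  have : (0:ℝ) < 4 ^ i := by positivity
  rw [pow_succ] at h4
  linarith


open Finset Classical in
lemma big_prime_factors_card (n w k : ℕ) (hn : n ≠ 0) (h : n < w ^ (k + 1)) :
    (n.primeFactors.filter (fun p => w ≤ p)).card ≤ k := by
  by_contra hcon
  push Not at hcon
  have hw : 1 ≤ w := by
    by_contra h0
    have : w = 0 := by omega
    subst this; simp at h
  have h1 : w ^ (n.primeFactors.filter (fun p => w ≤ p)).card ≤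
      ∏ p ∈ n.primeFactors.filter (fun p => w ≤ p), p := by
    apply pow_card_le_prod
    intro p hp; exact (mem_filter.1 hp).2
  have h2 : ∏ p ∈ n.primeFactors.filter (fun p => w ≤ p), p ≤ ∏ p ∈ n.primeFactors, p := by
    apply Nat.le_of_dvd
    · apply prod_pos; intro p hp; exact (Nat.prime_of_mem_primeFactors hp).pos
    · exact prod_dvd_prod_of_subset _ _ _ (filter_subset _ _)
  have h3 : ∏ p ∈ n.primeFactors, p ≤ n :=
    Nat.le_of_dvd (Nat.pos_of_ne_zero hn) (Nat.prod_primeFactors_dvd n)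
  have h4 : w ^ (k+1) ≤ w ^ (n.primeFactors.filter (fun p => w ≤ p)).card :=
    Nat.pow_le_pow_right hw hcon
  omega

open Finset Classical in
lemma dns_count : ∃ c : ℝ, 0 < c ∧ ∃ i0 : ℕ, 1 ≤ i0 ∧ ∀ i : ℕ, i0 ≤ i →
    c * (4:ℝ) ^ i / i ≤ (((Ioc (4 ^ (i - 1)) (4 ^ i)).filter (fun N => Dns N)).card : ℝ) := by
  obtain ⟨z1, hz1, hpb⟩ := pb_card
  obtain ⟨e0, he0, hrec⟩ := recip_sum
  obtain ⟨e1, he1⟩ := pow_unbounded_of_one_lt z1 (show (1:ℝ) < 4 by norm_num)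
  have hlog4 : 0 < Real.log 4 := Real.log_pos (by norm_num)
  refine ⟨(1 / 441) * (1 / (8 * Real.log 4)) * ((1 / 51) * (1 / (48 * Real.log 4))), by positivity,
    21 * (e0 + e1 + 21), by omega, fun i hi => ?_⟩
  set e := i / 21 with he
  have hie : 21 * e ≤ i := Nat.mul_div_le i 21
  have hie' : i < 21 * e + 21 := by omega
  have hee : e0 + e1 + 21 ≤ e := by omega
  set G := (Icc (4 ^ (6 * e)) (243 * (4 ^ (6 * e)) ^ 2 * 4 ^ e)).filter (fun N => Dns N) with hG
  set Q := (Ioc (4 ^ (5 * e)) (4 ^ (6 * e))).filter Nat.Prime with hQ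
  have hGsum : 1 / 51 ≤ ∑ N ∈ G, 1 / (N : ℝ) := by
    have h := dense_mass (4 ^ (6 * e)) (4 ^ e) (Nat.one_le_pow _ _ (by norm_num))
      (Nat.pow_le_pow_right (by norm_num) (by omega))
    refine le_trans ?_ h
    have hb : Real.log (243 * ((4 ^ (6 * e) : ℕ) : ℝ) ^ 2) + 1 ≤ 17 * e * Real.log 4 := by
      have h1 : Real.log (243 * ((4 ^ (6 * e) : ℕ) : ℝ) ^ 2) ≤ Real.log ((4:ℝ) ^ (4 + 12 * e)) := by
        apply Real.log_le_log (by positivity)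
        push_cast
        rw [pow_add, ← pow_mul, show 6 * e * 2 = 12 * e by ring]
        have : (0:ℝ) < 4 ^ (12 * e) := by positivity
        nlinarith
      rw [Real.log_pow] at h1
      have h2 : (1:ℝ) ≤ Real.log 4 := by
        have a5 : Real.log 4 = 2 * Real.log 2 := by
          rw [show (4:ℝ) = 2^2 by norm_num, Real.log_pow]; norm_num
        have := Real.log_two_gt_d9
        rw [a5]; linarith
      have h3 : (21:ℝ) ≤ e := by
        have : 21 ≤ e := by omega
        exact_mod_cast this
      push_cast at h1 ⊢
      nlinarith
    have hpos : 0 < Real.log (243 * ((4 ^ (6 * e) : ℕ) : ℝ) ^ 2) + 1 := by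
      have : 0 ≤ Real.log (243 * ((4 ^ (6 * e) : ℕ) : ℝ) ^ 2) := by
        apply Real.log_nonneg
        have : (1:ℝ) ≤ ((4 ^ (6 * e) : ℕ) : ℝ) := by
          exact_mod_cast Nat.one_le_pow _ _ (by norm_num)
        nlinarith
      linarith
    have hV : Real.log ((4 ^ e : ℕ) : ℝ) = e * Real.log 4 := by push_cast; rw [Real.log_pow]
    rw [hV]
    have : 1 / 17 ≤ e * Real.log 4 / (Real.log (243 * ((4 ^ (6 * e) : ℕ) : ℝ) ^ 2) + 1) := by
      rw [le_div_iff₀ hpos]; linarith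
    linarith
  have hQsum := hrec e (by omega)
  have hGm : ∀ N ∈ G, Dns N ∧ 4 ^ (6 * e) ≤ N ∧ N ≤ 4 ^ (13 * e + 4) := by
    intro N hN
    simp only [hG, mem_filter, mem_Icc] at hN
    refine ⟨hN.2, hN.1.1, hN.1.2.trans ?_⟩
    rw [pow_add, show 13 * e = 6 * e * 2 + e by ring, pow_add, ← pow_mul]
    have : 0 < 4 ^ (6 * e * 2) * 4 ^ e := by positivity
    nlinarith
  have hQm : ∀ p ∈ Q, p.Prime ∧ 4 ^ (5 * e) < p ∧ p ≤ 4 ^ (6 * e) := by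
    intro p hp
    simp only [hQ, mem_filter, mem_Ioc] at hp
    exact ⟨hp.2, hp.1⟩
  set t : ℕ × ℕ → ℝ := fun x => (4:ℝ) ^ i / (x.1 * x.2) with ht
  set D := (G ×ˢ Q).sigma (fun x => pb (t x)) with hD
  have hxb : ∀ x ∈ G ×ˢ Q, 4 ^ (11 * e) ≤ x.1 * x.2 ∧ x.1 * x.2 ≤ 4 ^ (19 * e + 4) := by
    intro x hx
    rw [mem_product] at hx
    have h1 := hGm _ hx.1
    have h2 := hQm _ hx.2
    constructor
    · rw [show 11 * e = 6 * e + 5 * e by ring, pow_add]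
      exact Nat.mul_le_mul h1.2.1 h2.2.1.le
    · rw [show 19 * e + 4 = (13 * e + 4) + 6 * e by ring, pow_add]
      exact Nat.mul_le_mul h1.2.2 h2.2.2
  have htlow : ∀ x ∈ G ×ˢ Q, (4:ℝ) ^ (e + 1) ≤ t x := by
    intro x hx
    have h1 := (hxb x hx)
    have hpos : (0:ℝ) < (x.1 : ℝ) * x.2 := by
      have : 0 < x.1 * x.2 := lt_of_lt_of_le (by positivity) h1.1
      exact_mod_cast this
    simp only [ht]
    rw [le_div_iff₀ hpos]
    have h2 : (x.1 : ℝ) * x.2 ≤ 4 ^ (19 * e + 4) := by exact_mod_cast h1.2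
    calc (4:ℝ) ^ (e+1) * ((x.1:ℝ) * x.2) ≤ 4 ^ (e+1) * 4 ^ (19 * e + 4) := by gcongr
      _ = 4 ^ (20 * e + 5) := by rw [← pow_add]; congr 1; ring
      _ ≤ 4 ^ i := pow_le_pow_right₀ (by norm_num) (by omega)
  have hthigh : ∀ x ∈ G ×ˢ Q, t x ≤ ((x.1 * x.2 : ℕ) : ℝ) := by
    intro x hx
    have h1 := (hxb x hx)
    have hpos : (0:ℝ) < (x.1 : ℝ) * x.2 := by
      have : 0 < x.1 * x.2 := lt_of_lt_of_le (by positivity) h1.1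
      exact_mod_cast this
    simp only [ht]
    rw [div_le_iff₀ hpos]
    have h2 : (4:ℝ) ^ (11 * e) ≤ (x.1 : ℝ) * x.2 := by exact_mod_cast h1.1
    push_cast
    calc (4:ℝ) ^ i ≤ 4 ^ (11 * e + 11 * e) := pow_le_pow_right₀ (by norm_num) (by omega)
      _ = 4 ^ (11 * e) * 4 ^ (11 * e) := by rw [pow_add]
      _ ≤ _ := by gcongr
  have hi0 : (0:ℝ) < i := by
    have : 0 < i := by omega
    exact_mod_cast this
  -- lower bound for D
  have hDlow : (4:ℝ) ^ i / i * (1 / (8 * Real.log 4)) * ((1 / 51) * (1 / (48 * Real.log 4))) ≤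
      (D.card : ℝ) := by
    rw [hD, card_sigma]
    push_cast
    calc _ ≤ (4:ℝ) ^ i / i * (1 / (8 * Real.log 4)) *
          ((∑ N ∈ G, 1 / (N : ℝ)) * (∑ p ∈ Q, 1 / (p:ℝ))) := by gcongr
      _ = ∑ x ∈ G ×ˢ Q, (4:ℝ) ^ i / i * (1 / (8 * Real.log 4)) * (1 / (x.1:ℝ) * (1 / (x.2:ℝ))) := by
          rw [sum_mul_sum, ← sum_product', mul_sum]
      _ ≤ _ := by
          apply sum_le_sum
          intro x hx
          have h1 := htlow x hx
          have h2 : z1 ≤ t x := he1.le.trans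
            ((pow_le_pow_right₀ (by norm_num) (by omega)).trans h1)
          have h3 := hpb _ h2
          have hb := (hxb x hx).1
          have hone : 1 ≤ x.1 * x.2 := le_trans (Nat.one_le_pow _ _ (by norm_num)) hb
          have honer : (1:ℝ) ≤ (x.1:ℝ) * x.2 := by exact_mod_cast hone
          have h4 : Real.log (t x) ≤ i * Real.log 4 := by
            rw [← Real.log_pow]
            apply Real.log_le_log (by linarith)
            simp only [ht]
            exact div_le_self (by positivity) honer
          have h5 : t x / 8 ≤ (pb (t x)).card * (i * Real.log 4) := h3.trans (by gcongr)
          have h6 : (4:ℝ) ^ i / i * (1 / (8 * Real.log 4)) * (1 / (x.1:ℝ) * (1 / (x.2:ℝ))) =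
              t x / 8 / (i * Real.log 4) := by
            simp only [ht]; field_simp
          rw [h6, div_le_iff₀ (by positivity)]
          exact h5
  -- upper bound for D
  set T := (Ioc (4 ^ (i - 1)) (4 ^ i)).filter (fun N => Dns N) with hT
  have hDm : ∀ d ∈ D, Dns d.1.1 ∧ d.1.2.Prime ∧ d.2.Prime ∧ 4 ^ e ≤ d.1.2 ∧ 4 ^ e ≤ d.2 ∧
      d.1.1 * d.1.2 * d.2 ∈ T ∧ d.1.1 ≠ 0 := by
    rintro ⟨x, q⟩ hd
    rw [hD, mem_sigma] at hd
    obtain ⟨hx, hq⟩ := hd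
    simp only at hx hq ⊢
    have hl := htlow x hx
    have hh := hthigh x hx
    have hb := hxb x hx
    have htpos : 0 ≤ t x := le_trans (by positivity) hl
    rw [mem_pb htpos] at hq
    rw [mem_product] at hx
    have h1 := hGm _ hx.1
    have h2 := hQm _ hx.2
    have hqe : 4 ^ e < q := by
      have : (4:ℝ) ^ e < q := by
        have : (4:ℝ) ^ e ≤ t x / 4 := by rw [pow_succ] at hl; linarith
        linarith [hq.2.1]
      exact_mod_cast this
    have h5 : 5 ≤ 4 ^ e := by
      calc 5 ≤ 4 ^ 2 := by norm_num
        _ ≤ 4 ^ e := Nat.pow_le_pow_right (by norm_num) (by omega)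
    have hpe : 4 ^ e ≤ x.2 := le_trans (Nat.pow_le_pow_right (by norm_num) (by omega)) h2.2.1.le
    have hNpos : 0 < x.1 := lt_of_lt_of_le (by positivity) h1.2.1
    have hqle : q ≤ x.1 * x.2 := by
      have := hq.2.2.trans hh
      exact_mod_cast this
    have hd1 : Dns (x.1 * x.2) := h1.1.mul_prime h2.1 (by omega) (by omega)
    have hd2 : Dns (x.1 * x.2 * q) := hd1.mul_prime hq.1 (by omega) (by have := hq.1.pos; omega)
    refine ⟨h1.1, h2.1, hq.1, hpe, hqe.le, ?_, hNpos.ne'⟩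
    rw [hT, mem_filter, mem_Ioc]
    have hposr : (0:ℝ) < (x.1 : ℝ) * x.2 := by
      have : 0 < x.1 * x.2 := lt_of_lt_of_le (by positivity) hb.1
      exact_mod_cast this
    refine ⟨⟨?_, ?_⟩, hd2⟩
    · have h6 := hq.2.1
      simp only [ht] at h6
      rw [div_div, div_lt_iff₀ (by positivity)] at h6
      have h7 : (4:ℝ) ^ i = 4 * 4 ^ (i-1) := by
        rw [← pow_succ']; congr 1; omega
      have : (4:ℝ) ^ (i-1) < (x.1:ℝ) * x.2 * q := by rw [h7] at h6; linarith
      exact_mod_cast this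
    · have h6 := hq.2.2
      simp only [ht] at h6
      rw [le_div_iff₀ hposr] at h6
      have : (x.1:ℝ) * x.2 * q ≤ 4 ^ i := by linarith
      exact_mod_cast this
  have hDup : D.card ≤ 441 * T.card := by
    apply card_le_mul_card_image_of_maps_to (f := fun d => d.1.1 * d.1.2 * d.2)
      (fun d hd => (hDm d hd).2.2.2.2.2.1)
    intro n hn
    rw [hT, mem_filter, mem_Ioc] at hn
    have hn0 : n ≠ 0 := ((Nat.zero_le _).trans_lt hn.1.1).ne'
    set F := n.primeFactors.filter (fun p => 4 ^ e ≤ p)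
    have hF : F.card ≤ 21 := by
      apply big_prime_factors_card n (4 ^ e) 21 hn0
      refine lt_of_le_of_lt hn.1.2 ?_
      rw [← pow_mul]
      exact Nat.pow_lt_pow_right (by norm_num) (by omega)
    calc _ ≤ (F ×ˢ F).card := by
          apply card_le_card_of_injOn (fun d => (d.1.2, d.2))
          · intro d hd
            simp only [coe_filter, Set.mem_ofPred_eq] at hd
            obtain ⟨hd, hdn⟩ := hd
            have h := hDm d hd
            simp only [coe_product, Set.mem_prod, mem_coe, F, mem_filter, Nat.mem_primeFactors]
            refine ⟨⟨⟨h.2.1, ?_, hn0⟩, h.2.2.2.1⟩, ⟨⟨h.2.2.1, ?_, hn0⟩, h.2.2.2.2.1⟩⟩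
            · exact ⟨d.1.1 * d.2, by rw [← hdn]; ring⟩
            · exact ⟨d.1.1 * d.1.2, by rw [← hdn]; ring⟩
          · rintro ⟨⟨a, b⟩, c⟩ hd ⟨⟨a', b'⟩, c'⟩ hd' heq
            simp only [coe_filter, Set.mem_ofPred_eq] at hd hd'
            have h := hDm _ hd.1
            simp only [Prod.mk.injEq] at heq
            obtain ⟨rfl, rfl⟩ := heq
            have h3 := hd.2.trans hd'.2.symm
            have h4 : a = a' := by
              apply Nat.eq_of_mul_eq_mul_right (Nat.mul_pos h.2.1.pos h.2.2.1.pos)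
              simp only [← mul_assoc]; exact h3
            subst h4; rfl
      _ = F.card * F.card := card_product _ _
      _ ≤ 21 * 21 := Nat.mul_le_mul hF hF
      _ = 441 := by norm_num
  have hDup' : (D.card : ℝ) ≤ 441 * T.card := by exact_mod_cast hDup
  calc _ = (1/441) * ((4:ℝ) ^ i / i * (1 / (8 * Real.log 4)) * ((1 / 51) * (1 / (48 * Real.log 4)))) := by
        ring
    _ ≤ (1/441) * (D.card : ℝ) := by gcongr
    _ ≤ T.card := by linarith

lemma exists_inj_of_card_le (s : Finset ℕ) (t : Finset (ℕ × ℕ)) (h : s.card ≤ t.card) :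
    ∃ f : ℕ → ℕ × ℕ, (∀ a ∈ s, f a ∈ t) ∧ ∀ a ∈ s, ∀ b ∈ s, f a = f b → a = b := by
  classical
  have h' : Fintype.card s ≤ Fintype.card t := by simpa using h
  obtain ⟨g⟩ := Function.Embedding.nonempty_of_card_le h'
  refine ⟨fun a => if h : a ∈ s then (g ⟨a, h⟩ : ℕ × ℕ) else (0, 0), ?_, ?_⟩
  · intro a ha
    simp [ha]
  · intro a ha b hb hab
    simp only [ha, hb, dif_pos] at hab
    have := g.injective (Subtype.ext hab)
    simpa using this

open Classical in
lemma hub : ∃ (J p00 : ℕ) (m j : ℕ → ℕ), ∀ p : ℕ, p.Prime → p00 < p →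
    (∃ N, Dns N ∧ m p = 243 * N) ∧ 3 * m p ≤ p ∧ j p < J ∧
      ∀ p' : ℕ, p'.Prime → p00 < p' → p ≠ p' → m p = m p' → j p ≠ j p' ∧ p ≤ 4 * p' := by
  obtain ⟨C, hC, hpi⟩ := pi_block
  obtain ⟨c, hc, i0, hi0, hdn⟩ := dns_count
  set J := ⌈1024 * C / c⌉₊ with hJ
  have hex : ∀ i : ℕ, i0 ≤ i → ∃ f : ℕ → ℕ × ℕ,
      (∀ a ∈ (Finset.Ioc (4 ^ (i+5)) (4 ^ (i + 5 + 1))).filter Nat.Prime,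
        f a ∈ ((Finset.Ioc (4 ^ (i - 1)) (4 ^ i)).filter (fun N => Dns N)) ×ˢ Finset.range J) ∧
      ∀ a ∈ (Finset.Ioc (4 ^ (i+5)) (4 ^ (i + 5 + 1))).filter Nat.Prime,
        ∀ b ∈ (Finset.Ioc (4 ^ (i+5)) (4 ^ (i + 5 + 1))).filter Nat.Prime, f a = f b → a = b := by
    intro i hi
    apply exists_inj_of_card_le
    rw [Finset.card_product, Finset.card_range]
    have h1 := hpi (i+5) (by omega)
    have h2 := hdn i hi
    have hipos : (0:ℝ) < i := by
      have : 0 < i := by omega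
      exact_mod_cast this
    have h3 : C * (4:ℝ) ^ (i+5) / ((i+5 : ℕ):ℝ) ≤ (1024 * C / c) * (c * (4:ℝ) ^ i / i) := by
      have : (1024 * C / c) * (c * (4:ℝ) ^ i / i) = C * (4:ℝ) ^ (i+5) / i := by
        rw [pow_add]; field_simp; norm_num
      rw [this]
      apply div_le_div_of_nonneg_left (by positivity) hipos
      push_cast; linarith
    have h4 : (1024 * C / c) ≤ J := Nat.le_ceil _
    have h5 : C * (4:ℝ) ^ (i+5) / ((i+5 : ℕ):ℝ) ≤
        J * (((Finset.Ioc (4 ^ (i - 1)) (4 ^ i)).filter (fun N => Dns N)).card : ℝ) := by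
      refine h3.trans ?_
      gcongr
    have h6 := h1.trans h5
    rw [mul_comm]
    exact_mod_cast h6
  choose! f hf1 hf2 using hex
  refine ⟨J, 4 ^ (i0 + 5), fun p => 243 * (f (Nat.log 4 p - 5) p).1,
    fun p => (f (Nat.log 4 p - 5) p).2, ?_⟩
  have hmem : ∀ p : ℕ, p.Prime → 4 ^ (i0 + 5) < p → i0 + 5 ≤ Nat.log 4 p ∧
      p ∈ (Finset.Ioc (4 ^ ((Nat.log 4 p - 5)+5)) (4 ^ ((Nat.log 4 p - 5) + 5 + 1))).filter Nat.Prime := by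
    intro p hp hlt
    have h1 : i0 + 5 ≤ Nat.log 4 p := Nat.le_log_of_pow_le (by norm_num) hlt.le
    refine ⟨h1, ?_⟩
    rw [show Nat.log 4 p - 5 + 5 = Nat.log 4 p by omega, Finset.mem_filter, Finset.mem_Ioc]
    refine ⟨⟨?_, (Nat.lt_pow_succ_log_self (by norm_num) p).le⟩, hp⟩
    refine lt_of_le_of_ne (Nat.pow_log_le_self 4 hp.ne_zero) ?_
    intro heq
    have h2 : 2 ∣ p := by
      rw [← heq]
      exact dvd_pow (by norm_num) (by omega)
    have h3 := (Nat.prime_dvd_prime_iff_eq Nat.prime_two hp).1 h2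
    have : 4 ^ 1 ≤ 4 ^ (i0 + 5) := Nat.pow_le_pow_right (by norm_num) (by omega)
    omega
  intro p hp hlt
  obtain ⟨hl, hm⟩ := hmem p hp hlt
  have hg := hf1 (Nat.log 4 p - 5) (by omega) p hm
  rw [Finset.mem_product, Finset.mem_filter, Finset.mem_Ioc, Finset.mem_range] at hg
  have hm' := hm
  rw [Finset.mem_filter, Finset.mem_Ioc] at hm'
  refine ⟨⟨_, hg.1.2, rfl⟩, ?_, hg.2, ?_⟩
  · have h1 := hg.1.1.2
    have h2 := hm'.1.1
    rw [pow_add] at h2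
    simp only
    omega
  · intro p' hp' hlt' hne heq
    obtain ⟨hl', hm2⟩ := hmem p' hp' hlt'
    have hg' := hf1 (Nat.log 4 p' - 5) (by omega) p' hm2
    rw [Finset.mem_product, Finset.mem_filter, Finset.mem_Ioc, Finset.mem_range] at hg'
    have hN : (f (Nat.log 4 p - 5) p).1 = (f (Nat.log 4 p' - 5) p').1 := by
      simp only at heq; omega
    have hlog : Nat.log 4 p = Nat.log 4 p' := by
      have a1 := hg.1.1
      have a2 := hg'.1.1
      rw [← hN] at a2
      have b1 := (Nat.pow_lt_pow_iff_right (show 1 < 4 by norm_num)).1 (a1.1.trans_le a2.2)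
      have b2 := (Nat.pow_lt_pow_iff_right (show 1 < 4 by norm_num)).1 (a2.1.trans_le a1.2)
      omega
    rw [← hlog] at hm2
    constructor
    · intro hj
      apply hne
      apply hf2 (Nat.log 4 p - 5) (by omega) p hm p' hm2
      have key : f (Nat.log 4 p - 5) p = f (Nat.log 4 p' - 5) p' := Prod.ext hN hj
      rw [← hlog] at key
      exact key
    · rw [Finset.mem_filter, Finset.mem_Ioc] at hm2
      have h1 := hm'.1.2
      have h2 := hm2.1.1
      rw [pow_succ] at h1
      omega


lemma sm_mul {a b u : ℕ} (ha : a ≠ 0) (hb : b ≠ 0) : sm (a * b) u = sm a u * sm b u := by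
  obtain ⟨c, hc, hcr⟩ := sm_decomp a u ha
  obtain ⟨d, hd, hdr⟩ := sm_decomp b u hb
  have h : a * b = (c * d) * (sm a u * sm b u) := by
    calc a * b = (c * sm a u) * (d * sm b u) := by rw [← hc, ← hd]
      _ = _ := by ring
  rw [h]
  exact sm_eq (by rw [← h]; exact mul_ne_zero ha hb) (hcr.mul hdr) ((sm_smo a u).mul (sm_smo b u))

lemma mul_sm_le {n q : ℕ} (hn : n ≠ 0) (hq : q.Prime) (hd : q ∣ n) : q * sm n q ≤ n := by
  apply Nat.le_of_dvd (Nat.pos_of_ne_zero hn)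
  apply Nat.Coprime.mul_dvd_of_dvd_of_dvd _ hd (sm_dvd n q hn)
  exact rough_smo_coprime (rough_prime hq le_rfl) (sm_smo n q)

lemma smo_of_all_le {u n : ℕ} (hn : n ≠ 0) (h : n < u) : Smo u n :=
  fun _ _ hd => (Nat.le_of_dvd (Nat.pos_of_ne_zero hn) hd).trans_lt h

lemma hub_dense {m N q : ℕ} (hN : Dns N) (hm : m = 243 * N) (hq : q.Prime) (hd : q ∣ m) :
    q = 3 ∨ (5 ≤ q ∧ q < sm m q) := by
  subst hm
  rcases (hq.dvd_mul).1 hd with h | h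
  · left
    have : q ∣ 3 ^ 5 := by norm_num; exact h
    exact (Nat.prime_dvd_prime_iff_eq hq Nat.prime_three).1 (hq.dvd_of_dvd_pow this)
  · right
    have h1 := hN.2 q hq h
    refine ⟨h1.1, ?_⟩
    rw [sm_mul (by norm_num) hN.1]
    have : sm 243 q = 243 := by
      apply sm_of_smo (by norm_num)
      intro r hr hrd
      have : r ∣ 3 ^ 5 := by norm_num; exact hrd
      have := (Nat.prime_dvd_prime_iff_eq hr Nat.prime_three).1 (hr.dvd_of_dvd_pow this)
      omega
    rw [this]; exact h1.2

lemma slots : ∃ (S : ℕ) (m s : ℕ → ℕ), ∀ p : ℕ, p.Prime → 3 ≤ p →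
    m p ≠ 0 ∧ ¬ 2 ∣ m p ∧ Smo p (m p) ∧ m p ≤ p ∧
    (∀ q : ℕ, q.Prime → q ∣ m p → q * m p ≤ p * sm (m p) q) ∧ 2 ≤ s p ∧ s p ≤ S ∧
    ∀ p' : ℕ, p'.Prime → 3 ≤ p' → ∀ o : ℕ, o ≠ 0 → sm o p = m p → sm o p' = m p' →
      (p ∣ o → p' ∣ o → s p = s p' → p = p') ∧
      (p * 2 ^ s p < p' * 2 ^ (s p' + 1) → p' * 2 ^ s p' < p * 2 ^ (s p + 1) → p = p') ∧
      (p' ∣ o → p * 2 ^ s p < 2 ^ (s p' + 1) → 2 ^ s p' < p * 2 ^ (s p + 1) → False) := by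
  obtain ⟨J, p00, m0, j, hub⟩ := hub
  obtain ⟨p0, hp0a, hp0b⟩ : ∃ p0 : ℕ, p00 + 5 ≤ p0 ∧ 2 ^ (12 + 4 * J + 2) ≤ p0 :=
    ⟨p00 + 5 + 2 ^ (12 + 4 * J + 2), Nat.le_add_right _ _, Nat.le_add_left _ _⟩
  set m : ℕ → ℕ := fun p => if p ≤ p0 then 1 else m0 p with hm
  set s : ℕ → ℕ := fun p => if p ≤ p0 then p ^ 2 else 12 + 4 * j p with hs
  have mS : ∀ p, p ≤ p0 → m p = 1 ∧ s p = p ^ 2 := by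
    intro p h; simp [hm, hs, h]
  have mL : ∀ p, ¬ p ≤ p0 → m p = m0 p ∧ s p = 12 + 4 * j p := by
    intro p h; simp [hm, hs, h]
  have big : ∀ p, p.Prime → ¬ p ≤ p0 → (3 * m p ≤ p ∧ 3 ∣ m p ∧ m p ≠ 0 ∧ ¬ 2 ∣ m p ∧
      (∀ q : ℕ, q.Prime → q ∣ m p → q = 3 ∨ (5 ≤ q ∧ q < sm (m p) q)) ∧
      12 ≤ s p ∧ 2 ^ (s p + 1) ≤ p0 ∧ s p ≤ 12 + 4 * J) := by
    intro p hp hl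
    obtain ⟨⟨N, hN, hmN⟩, h2, h3, -⟩ := hub p hp (by omega)
    rw [(mL p hl).1, (mL p hl).2]
    have hd := fun q hq hd => hub_dense (q := q) hN hmN hq hd
    refine ⟨h2, ?_, ?_, ?_, hd, by omega, ?_, by omega⟩
    · rw [hmN]; exact ⟨81 * N, by ring⟩
    · rw [hmN]; exact mul_ne_zero (by norm_num) hN.1
    · intro h
      have := hd 2 Nat.prime_two h
      omega
    · have : 2 ^ (12 + 4 * j p + 1) ≤ 2 ^ (12 + 4 * J + 2) :=
        Nat.pow_le_pow_right (by norm_num) (by omega)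
      omega
  have LS : ∀ p p' o : ℕ, p.Prime → 3 ≤ p' → o ≠ 0 → sm o p = m p → sm o p' = m p' →
      ¬ p ≤ p0 → p' ≤ p0 → p' = 3 := by
    intro p p' o hp h3 ho h1 h2 hl hsm
    have a1 : 3 ∣ o := ((big p hp hl).2.1.trans (h1 ▸ dvd_rfl)).trans (sm_dvd o p ho)
    by_contra hne
    have a2 : 3 ∣ sm o p' := dvd_sm ho a1 (smo_prime Nat.prime_three (by omega))
    rw [h2, (mS p' hsm).1] at a2
    omega
  have T22 : ∀ p p' o : ℕ, p.Prime → p'.Prime → 3 ≤ p' → o ≠ 0 → sm o p = m p → sm o p' = m p' →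
      p' < p → p' ∣ o → s p = s p' → False := by
    intro p p' o hp hp' h3 ho h1 h2 hlt hd hss
    have a1 : p' ∣ m p := h1 ▸ dvd_sm ho hd (smo_prime hp' hlt)
    by_cases hl : p ≤ p0
    · rw [(mS p hl).1] at a1
      exact hp'.one_lt.ne' (Nat.dvd_one.1 a1)
    · have hb := big p hp hl
      by_cases hl' : p' ≤ p0
      · have := LS p p' o hp h3 ho h1 h2 hl hl'
        have h9 := (mS p' hl').2
        rw [this] at h9 hss
        norm_num at h9
        omega
      · have hb' := big p' hp' hl'
        have a2 : sm (m p) p' = m p' := by rw [← h1, sm_sm ho hlt.le, h2]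
        rcases hb.2.2.2.2.1 p' hp' a1 with h | h
        · omega
        · rw [a2] at h; omega
  have T11 : ∀ p p' o : ℕ, p.Prime → p'.Prime → 3 ≤ p' → o ≠ 0 → sm o p = m p → sm o p' = m p' →
      p' < p → p * 2 ^ s p < p' * 2 ^ (s p' + 1) → p' * 2 ^ s p' < p * 2 ^ (s p + 1) → False := by
    intro p p' o hp hp' h3 ho h1 h2 hlt H1 H2
    by_cases hl : p ≤ p0
    · rw [(mS p hl).2, (mS p' (by omega)).2] at H1
      have : p' * 2 ^ (p' ^ 2 + 1) ≤ p * 2 ^ (p ^ 2) :=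
        Nat.mul_le_mul hlt.le (Nat.pow_le_pow_right (by norm_num) (by nlinarith))
      omega
    · have hb := big p hp hl
      by_cases hl' : p' ≤ p0
      · have := LS p p' o hp h3 ho h1 h2 hl hl'
        have h9 := (mS p' hl').2
        subst this
        rw [h9] at H1
        have : 2 ^ 12 ≤ 2 ^ s p := Nat.pow_le_pow_right (by norm_num) hb.2.2.2.2.2.1
        norm_num at H1 this
        have := Nat.mul_le_mul (show 3 ≤ p by omega) this
        omega
      · have hb' := big p' hp' hl'
        have a2 : sm (m p) p' = m p' := by rw [← h1, sm_sm ho hlt.le, h2]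
        by_cases hmm : m p = m p'
        · have b1 := (hub p hp (by omega)).2.2.2 p' hp' (by omega) (by omega)
            (by rw [← (mL p hl).1, ← (mL p' hl').1, hmm])
          rw [(mL p hl).2, (mL p' hl').2] at H1 H2
          rcases lt_or_gt_of_ne b1.1 with h | h
          · have c1 : 2 ^ (12 + 4 * j p + 1 + 3) ≤ 2 ^ (12 + 4 * j p') :=
              Nat.pow_le_pow_right (by norm_num) (by omega)
            rw [pow_add _ _ 3] at c1
            have c2 := Nat.mul_le_mul_left p' c1
            have c3 := Nat.mul_le_mul_right (2 ^ (12 + 4 * j p + 1)) b1.2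
            have : 0 < p' * 2 ^ (12 + 4 * j p + 1) := Nat.mul_pos hp'.pos (by positivity)
            nlinarith
          · have c1 : 2 ^ (12 + 4 * j p' + 1) ≤ 2 ^ (12 + 4 * j p) :=
              Nat.pow_le_pow_right (by norm_num) (by omega)
            have := Nat.mul_le_mul hlt.le c1
            omega
        · have hns : ¬ Smo p' (m p) := by
            intro h
            rw [sm_of_smo hb.2.2.1 h] at a2
            exact hmm a2
          unfold Smo at hns
          push Not at hns
          obtain ⟨q, hq, hqd, hqp⟩ := hns
          rcases hb.2.2.2.2.1 q hq hqd with h | h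
          · omega
          · have c1 := mul_sm_le hb.2.2.1 hq hqd
            have c2 : q * q ≤ m p := le_trans (Nat.mul_le_mul_left q h.2.le) c1
            have c3 : p' * p' ≤ p := le_trans (Nat.mul_le_mul hqp hqp) (by omega)
            have c4 : p' * 2 ^ (s p' + 1) ≤ p' * p' := Nat.mul_le_mul_left _ (by
              have := hb'.2.2.2.2.2.2.1; omega)
            have c5 : p * 1 ≤ p * 2 ^ s p := Nat.mul_le_mul_left _ Nat.one_le_two_pow
            omega
  have T12 : ∀ p p' o : ℕ, p.Prime → p'.Prime → 3 ≤ p → 3 ≤ p' → o ≠ 0 → sm o p = m p →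
      sm o p' = m p' →
      p' ∣ o → p * 2 ^ s p < 2 ^ (s p' + 1) → 2 ^ s p' < p * 2 ^ (s p + 1) → False := by
    intro p p' o hp hp' h3 h3' ho h1 h2 hd H1 H2
    have c5 : p * 1 ≤ p * 2 ^ s p := Nat.mul_le_mul_left _ Nat.one_le_two_pow
    by_cases hl : p ≤ p0
    · by_cases hl' : p' ≤ p0
      · rcases lt_trichotomy p' p with h | h | h
        · have a1 : p' ∣ sm o p := dvd_sm ho hd (smo_prime hp' h)
          rw [h1, (mS p hl).1] at a1
          exact hp'.one_lt.ne' (Nat.dvd_one.1 a1)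
        · subst h
          rw [pow_succ] at H1
          have : 0 < 2 ^ s p' := by positivity
          nlinarith
        · rw [(mS p hl).2, (mS p' hl').2] at H2
          have d1 : 2 ^ (p + (p ^ 2 + 1)) ≤ 2 ^ (p' ^ 2) :=
            Nat.pow_le_pow_right (by norm_num) (by nlinarith)
          rw [pow_add] at d1
          have d2 : p ≤ 2 ^ p := Nat.lt_two_pow_self.le
          have := Nat.mul_le_mul_right (2 ^ (p ^ 2 + 1)) d2
          omega
      · have hb' := big p' hp' hl'
        have := LS p' p o hp' h3 ho h2 h1 hl' hl
        have h9 := (mS p hl).2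
        subst this
        rw [h9] at H2
        have : 2 ^ 12 ≤ 2 ^ s p' := Nat.pow_le_pow_right (by norm_num) hb'.2.2.2.2.2.1
        norm_num at H2 this
        omega
    · by_cases hl' : p' ≤ p0
      · have := LS p p' o hp h3' ho h1 h2 hl hl'
        have h9 := (mS p' hl').2
        subst this
        rw [h9] at H1
        have : 2 ^ 14 ≤ 2 ^ (12 + 4 * J + 2) := Nat.pow_le_pow_right (by norm_num) (by omega)
        norm_num at H1 this
        omega
      · have hb' := (big p' hp' hl').2.2.2.2.2.2.1
        omega
  refine ⟨p0 ^ 2 + 12 + 4 * J, m, s, ?_⟩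
  intro p hp h3
  have hb := big p hp
  have F1 : m p ≠ 0 := by
    by_cases hl : p ≤ p0
    · rw [(mS p hl).1]; norm_num
    · exact (hb hl).2.2.1
  have F4 : m p < p := by
    by_cases hl : p ≤ p0
    · rw [(mS p hl).1]; omega
    · have := (hb hl).1; omega
  refine ⟨F1, ?_, smo_of_all_le F1 F4, F4.le, ?_, ?_, ?_, ?_⟩
  · by_cases hl : p ≤ p0
    · rw [(mS p hl).1]; norm_num
    · exact (hb hl).2.2.2.1
  · intro q hq hd
    by_cases hl : p ≤ p0
    · rw [(mS p hl).1] at hd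
      exact absurd (Nat.dvd_one.1 hd) hq.ne_one
    · have h := (hb hl)
      have hpos := sm_pos (m p) q
      rcases h.2.2.2.2.1 q hq hd with h' | h'
      · subst h'
        nlinarith
      · have := Nat.mul_le_mul h'.2.le F4.le
        linarith
  · by_cases hl : p ≤ p0
    · rw [(mS p hl).2]; nlinarith
    · have := (hb hl).2.2.2.2.2.1; omega
  · by_cases hl : p ≤ p0
    · rw [(mS p hl).2]
      have := Nat.pow_le_pow_left hl 2
      omega
    · have := (hb hl).2.2.2.2.2.2.2; omega
  · intro p' hp' h3' o ho h1 h2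
    refine ⟨?_, ?_, fun hd => T12 p p' o hp hp' h3 h3' ho h1 h2 hd⟩
    · intro hd hd' hss
      rcases lt_trichotomy p' p with h | h | h
      · exact (T22 p p' o hp hp' h3' ho h1 h2 h hd' hss).elim
      · exact h.symm
      · exact (T22 p' p o hp' hp h3 ho h2 h1 h hd hss.symm).elim
    · intro H1 H2
      rcases lt_trichotomy p' p with h | h | h
      · exact (T11 p p' o hp hp' h3' ho h1 h2 h H1 H2).elim
      · exact h.symm
      · exact (T11 p' p o hp' hp h3 ho h2 h1 h H2 H1).elim


lemma perm_merge_aux {V : Type*} [DecidableEq V] [Finite V] (f : Equiv.Perm V) (u v : V)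
    (h : ¬ f.SameCycle u v) :
    (f * Equiv.swap u v).SameCycle u v ∧
      ∀ x y, f.SameCycle x y → (f * Equiv.swap u v).SameCycle x y := by
  set g := f * Equiv.swap u v with hg
  have gu : g u = f v := by simp [hg]
  have gv : g v = f u := by simp [hg]
  have gx : ∀ x, x ≠ u → x ≠ v → g x = f x := by
    intro x h1 h2
    simp [hg, Equiv.swap_apply_of_ne_of_ne h1 h2]
  have hstep : ∀ x, g.SameCycle x (g x) := fun x => ⟨1, by simp⟩
  have h1 : ∀ i : ℕ, g.SameCycle u ((f ^ i) (f v)) := by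
    intro i
    induction i with
    | zero => simpa [gu] using hstep u
    | succ i ih =>
      set y := (f ^ i) (f v) with hy
      have e : (f ^ (i + 1)) (f v) = f y := by rw [pow_succ', Equiv.Perm.mul_apply]
      rw [e]
      have hyu : y ≠ u := by
        intro hyu
        apply h
        refine Equiv.Perm.SameCycle.symm ⟨(i : ℤ) + 1, ?_⟩
        rw [← hyu, hy, zpow_add, Equiv.Perm.mul_apply]
        simp
      by_cases hyv : y = v
      · rw [hyv, ← gu]; exact hstep u
      · rw [← gx y hyu hyv]
        exact ih.trans (hstep y)
  have huv : g.SameCycle u v := by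
    have hpos : 0 < orderOf f := orderOf_pos f
    have h2 := h1 (orderOf f - 1)
    have : (f ^ (orderOf f - 1)) (f v) = v := by
      rw [← Equiv.Perm.mul_apply, ← pow_succ, Nat.sub_add_cancel hpos, pow_orderOf_eq_one]
      rfl
    rwa [this] at h2
  refine ⟨huv, ?_⟩
  have hf : ∀ x, g.SameCycle x (f x) := by
    intro x
    by_cases hxu : x = u
    · subst hxu; rw [← gv]; exact huv.trans (hstep v)
    · by_cases hxv : x = v
      · subst hxv; rw [← gu]; exact huv.symm.trans (hstep u)
      · rw [← gx x hxu hxv]; exact hstep x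
  rintro x y ⟨i, rfl⟩
  have hn : ∀ (k : ℕ) (x : V), g.SameCycle x ((f ^ k) x) := by
    intro k
    induction k with
    | zero => intro x; exact Equiv.Perm.SameCycle.refl _ _
    | succ k ih =>
      intro x
      rw [pow_succ', Equiv.Perm.mul_apply]
      exact (ih x).trans (hf _)
  rcases Int.eq_nat_or_neg i with ⟨k, rfl | rfl⟩
  · simpa using hn k x
  · have := hn k ((f ^ (-(k : ℤ))) x)
    refine Equiv.Perm.SameCycle.symm ?_
    convert this using 1
    rw [← Equiv.Perm.mul_apply, ← zpow_natCast, ← zpow_add]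
    simp

/-- fold of the merging swaps -/
def Fperm {V ι : Type*} [DecidableEq V] (π : Equiv.Perm V) (u v : ι → V) : List ι → Equiv.Perm V
  | [] => π
  | a :: L => Fperm π u v L * Equiv.swap (u a) (v a)

lemma Fperm_apply {V ι : Type*} [DecidableEq V] (π : Equiv.Perm V) (u v : ι → V)
    (hu : Function.Injective u) (hv : Function.Injective v) (huv : ∀ a b, u a ≠ v b)
    (L : List ι) (hL : L.Nodup) (x : V) :
    Fperm π u v L x = π x ∨ ∃ a ∈ L, (x = u a ∧ Fperm π u v L x = π (v a)) ∨
      (x = v a ∧ Fperm π u v L x = π (u a)) := by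
  induction L generalizing x with
  | nil => left; rfl
  | cons a L ih =>
    rw [List.nodup_cons] at hL
    have ih' := fun x => ih hL.2 x
    by_cases hxu : x = u a
    · right
      refine ⟨a, by simp, Or.inl ⟨hxu, ?_⟩⟩
      have e : Fperm π u v (a :: L) x = Fperm π u v L (v a) := by
        simp [Fperm, hxu]
      rw [e]
      rcases ih' (v a) with h | ⟨b, hb, h | h⟩
      · exact h
      · exact absurd h.1.symm (huv _ _)
      · have := hv h.1; subst this; exact absurd hb hL.1
    · by_cases hxv : x = v a
      · right
        refine ⟨a, by simp, Or.inr ⟨hxv, ?_⟩⟩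
        have e : Fperm π u v (a :: L) x = Fperm π u v L (u a) := by
          simp [Fperm, hxv]
        rw [e]
        rcases ih' (u a) with h | ⟨b, hb, h | h⟩
        · exact h
        · have := hu h.1; subst this; exact absurd hb hL.1
        · exact absurd h.1 (huv _ _)
      · have e : Fperm π u v (a :: L) x = Fperm π u v L x := by
          simp [Fperm, Equiv.swap_apply_of_ne_of_ne hxu hxv]
        rw [e]
        rcases ih' x with h | ⟨b, hb, h⟩
        · left; exact h
        · right; exact ⟨b, by simp [hb], h⟩

lemma sameCycle_invariant {V : Type*} (f : Equiv.Perm V) (T : Set V) (h : ∀ x, x ∈ T ↔ f x ∈ T)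
    {x y : V} (hxy : f.SameCycle x y) : x ∈ T ↔ y ∈ T := by
  have hn : ∀ (k : ℕ) (x : V), x ∈ T ↔ (f ^ k) x ∈ T := by
    intro k
    induction k with
    | zero => intro x; rfl
    | succ k ih =>
      intro x
      rw [pow_succ', Equiv.Perm.mul_apply, ← h, ← ih]
  obtain ⟨i, rfl⟩ := hxy
  rcases Int.eq_nat_or_neg i with ⟨k, rfl | rfl⟩
  · simpa using hn k x
  · have := hn k ((f ^ (-(k : ℤ))) x)
    rw [this, ← Equiv.Perm.mul_apply, ← zpow_natCast, ← zpow_add]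
    simp

lemma Fperm_merge {V ι : Type*} [DecidableEq V] [Finite V] (π : Equiv.Perm V) (u v : ι → V)
    (hu : Function.Injective u) (hv : Function.Injective v) (huv : ∀ a b, u a ≠ v b)
    (T : ι → Set V) (hT : ∀ a x, x ∈ T a ↔ π x ∈ T a) (hvT : ∀ a, v a ∈ T a)
    (huT : ∀ a, u a ∉ T a)
    (L : List ι) (hL : L.Nodup) (hLT : L.Pairwise (fun a b => u b ∈ T a ↔ v b ∈ T a)) :
    (∀ x y, π.SameCycle x y → (Fperm π u v L).SameCycle x y) ∧
      ∀ a ∈ L, (Fperm π u v L).SameCycle (u a) (v a) := by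
  induction L with
  | nil => exact ⟨fun x y h => h, by simp⟩
  | cons a L ih =>
    rw [List.nodup_cons] at hL
    rw [List.pairwise_cons] at hLT
    obtain ⟨ih1, ih2⟩ := ih hL.2 hLT.2
    have hinv : ∀ x, x ∈ T a ↔ Fperm π u v L x ∈ T a := by
      intro x
      rcases Fperm_apply π u v hu hv huv L hL.2 x with h | ⟨b, hb, h | h⟩
      · rw [h, ← hT]
      · rw [h.2, ← hT, h.1]; exact hLT.1 b hb
      · rw [h.2, ← hT, h.1]; exact (hLT.1 b hb).symm
    have hns : ¬ (Fperm π u v L).SameCycle (u a) (v a) := by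
      intro h
      exact huT a ((sameCycle_invariant _ _ hinv h).2 (hvT a))
    obtain ⟨m1, m2⟩ := perm_merge_aux _ _ _ hns
    refine ⟨fun x y h => m2 x y (ih1 x y h), ?_⟩
    intro b hb
    rcases List.mem_cons.1 hb with rfl | hb
    · exact m1
    · exact m2 _ _ (ih2 b hb)

section cliques

variable {O : Type*} (ℓ : O → ℕ) (par : O → Bool)

/-- base permutation: rotate each clique -/
def basePerm : Equiv.Perm (Σ o : O, Fin (ℓ o + 1)) :=
  Equiv.Perm.sigmaCongrRight
    (fun o => if par o then finRotate (ℓ o + 1) else (finRotate (ℓ o + 1))⁻¹)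

/-- tail of the directed edge number `k` of the clique of `o` -/
def tl (o : O) (k : ℕ) (h : k < ℓ o) : Σ o : O, Fin (ℓ o + 1) :=
  ⟨o, if par o then ⟨k, by omega⟩ else ⟨k + 1, by omega⟩⟩

/-- head of the directed edge number `k` of the clique of `o` -/
def hdd (o : O) (k : ℕ) (h : k < ℓ o) : Σ o : O, Fin (ℓ o + 1) :=
  ⟨o, if par o then ⟨k + 1, by omega⟩ else ⟨k, by omega⟩⟩

lemma basePerm_fst (x : Σ o : O, Fin (ℓ o + 1)) : (basePerm ℓ par x).1 = x.1 := rfl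

lemma basePerm_tl (o : O) (k : ℕ) (h : k < ℓ o) :
    basePerm ℓ par (tl ℓ par o k h) = hdd ℓ par o k h := by
  unfold basePerm tl hdd
  by_cases hp : par o
  · simp [hp, finRotate_of_lt h]
  · simp only [hp, Equiv.sigmaCongrRight_apply, Sigma.map, id]
    simp only [Bool.false_eq_true, if_false]
    congr 1
    rw [Equiv.Perm.inv_eq_iff_eq]
    exact (finRotate_of_lt h).symm

lemma tl_inj {o o' : O} {k k' : ℕ} {h : k < ℓ o} {h' : k' < ℓ o'}
    (he : tl ℓ par o k h = tl ℓ par o' k' h') : o = o' ∧ k = k' := by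
  have h1 : o = o' := congrArg Sigma.fst he
  subst h1
  refine ⟨rfl, ?_⟩
  unfold tl at he
  by_cases hp : par o
  · simpa [hp] using he
  · simpa [hp] using he

lemma basePerm_same (o : O) (i j : Fin (ℓ o + 1)) : (basePerm ℓ par).SameCycle ⟨o, i⟩ ⟨o, j⟩ := by
  have h0 : ∀ k (h : k < ℓ o + 1), (basePerm ℓ par).SameCycle ⟨o, ⟨0, by omega⟩⟩ ⟨o, ⟨k, h⟩⟩ := by
    intro k
    induction k with
    | zero => intro h; exact Equiv.Perm.SameCycle.refl _ _
    | succ k ih =>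
      intro h
      refine (ih (by omega)).trans ?_
      have h1 := basePerm_tl ℓ par o k (by omega)
      have h2 : (basePerm ℓ par).SameCycle (tl ℓ par o k (by omega)) (hdd ℓ par o k (by omega)) :=
        ⟨1, by simpa using h1⟩
      unfold tl hdd at h2
      by_cases hp : par o
      · simpa [hp] using h2
      · have := h2.symm
        simpa [hp] using this
  exact (h0 i.1 i.2).symm.trans (h0 j.1 j.2)

lemma tl_true {o : O} {k : ℕ} {h : k < ℓ o} (hp : par o = true) :
    ((tl ℓ par o k h).2 : ℕ) = k + 0 := by simp [tl, hp]

lemma tl_false {o : O} {k : ℕ} {h : k < ℓ o} (hp : par o = false) :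
    ((tl ℓ par o k h).2 : ℕ) = k + 1 := by simp [tl, hp]

lemma hdd_true {o : O} {k : ℕ} {h : k < ℓ o} (hp : par o = true) :
    ((hdd ℓ par o k h).2 : ℕ) = k + 1 := by simp [hdd, hp]

lemma hdd_false {o : O} {k : ℕ} {h : k < ℓ o} (hp : par o = false) :
    ((hdd ℓ par o k h).2 : ℕ) = k + 0 := by simp [hdd, hp]

theorem clique_merge [Finite O] {ι : Type*} [Fintype ι] (lo up : ι → O) (e1 e2 : ι → ℕ)
    (h1 : ∀ n, e1 n < ℓ (lo n)) (h2 : ∀ n, e2 n < ℓ (up n)) (hpar : ∀ n, par (lo n) ≠ par (up n))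
    (d1 : ∀ n n', lo n = lo n' → e1 n = e1 n' → n = n')
    (d2 : ∀ n n', up n = up n' → e2 n = e2 n' → n = n')
    (d3 : ∀ n n', lo n = up n' → e1 n ≠ e2 n')
    (rk : ι → ℕ) (T : ι → Set O) (hup : ∀ n, up n ∈ T n) (hlo : ∀ n, lo n ∉ T n)
    (hT : ∀ n n', n ≠ n' → rk n' ≤ rk n → (lo n' ∈ T n ↔ up n' ∈ T n))
    (hconn : ∀ r : O → O → Prop, Equivalence r → (∀ n, r (lo n) (up n)) → ∀ a b, r a b) :
    ∃ g : Equiv.Perm (Σ o : O, Fin (ℓ o + 1)), (∀ x y, g.SameCycle x y) ∧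
      ∀ x, (g x).1 = x.1 ∨ ∃ n, ∃ d : ℕ,
        (x.1 = lo n ∧ (x.2 : ℕ) = e1 n + d ∧ (g x).1 = up n ∧ ((g x).2 : ℕ) = e2 n + d) ∨
        (x.1 = up n ∧ (x.2 : ℕ) = e2 n + d ∧ (g x).1 = lo n ∧ ((g x).2 : ℕ) = e1 n + d) := by
  classical
  set π := basePerm ℓ par with hπ
  set u : ι → Σ o : O, Fin (ℓ o + 1) := fun n => tl ℓ par (lo n) (e1 n) (h1 n) with hu
  set v : ι → Σ o : O, Fin (ℓ o + 1) := fun n => tl ℓ par (up n) (e2 n) (h2 n) with hv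
  set L := (Finset.univ : Finset ι).toList.insertionSort (fun a b => rk b ≤ rk a) with hL
  have hperm := List.perm_insertionSort (fun a b => rk b ≤ rk a) (Finset.univ : Finset ι).toList
  have hLn : L.Nodup := hperm.nodup_iff.2 (Finset.nodup_toList _)
  have hLm : ∀ n, n ∈ L := fun n => hperm.mem_iff.2 (by simp)
  have : Std.Total (fun a b : ι => rk b ≤ rk a) := ⟨fun a b => le_total _ _⟩
  have : IsTrans ι (fun a b : ι => rk b ≤ rk a) := ⟨fun a b c h h' => le_trans h' h⟩
  have hLs : L.Pairwise (fun a b => rk b ≤ rk a) := List.pairwise_insertionSort _ _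
  have ui : Function.Injective u := by
    intro a b h
    have := tl_inj ℓ par h
    exact d1 a b this.1 this.2
  have vi : Function.Injective v := by
    intro a b h
    have := tl_inj ℓ par h
    exact d2 a b this.1 this.2
  have uv : ∀ a b, u a ≠ v b := by
    intro a b h
    have := tl_inj ℓ par h
    exact d3 a b this.1 this.2
  have hm := Fperm_merge π u v ui vi uv (fun n => {x | x.1 ∈ T n}) (fun a x => Iff.rfl)
    hup hlo L hLn (by
      have := hLs.and hLn
      refine this.imp ?_
      intro a b hab
      exact hT a b hab.2 hab.1)
  refine ⟨Fperm π u v L, ?_, ?_⟩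
  · have := hconn (fun a b => ∀ i j, (Fperm π u v L).SameCycle ⟨a, i⟩ ⟨b, j⟩) ⟨?_, ?_, ?_⟩ ?_
    · rintro ⟨a, i⟩ ⟨b, j⟩; exact this a b i j
    · intro a i j; exact hm.1 _ _ (basePerm_same ℓ par a i j)
    · intro a b h i j; exact (h j i).symm
    · intro a b c h h' i j; exact (h i 0).trans (h' 0 j)
    · intro n i j
      have a1 := hm.2 n (hLm n)
      exact ((hm.1 _ _ (basePerm_same ℓ par (lo n) i _)).trans a1).trans
        (hm.1 _ _ (basePerm_same ℓ par (up n) _ j))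
  · intro x
    rcases Fperm_apply π u v ui vi uv L hLn x with h | ⟨n, -, h | h⟩
    · left; rw [h]; rfl
    · right
      refine ⟨n, ?_⟩
      have e : Fperm π u v L x = hdd ℓ par (up n) (e2 n) (h2 n) := by
        rw [h.2]; exact basePerm_tl ℓ par _ _ _
      rw [e, h.1]
      have hp := hpar n
      rcases hq : par (lo n) with _ | _
      · have hr : par (up n) = true := by rw [hq] at hp; simpa using hp.symm
        exact ⟨1, Or.inl ⟨rfl, tl_false ℓ par hq, rfl, hdd_true ℓ par hr⟩⟩
      · have hr : par (up n) = false := by rw [hq] at hp; simpa using hp.symm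
        exact ⟨0, Or.inl ⟨rfl, tl_true ℓ par hq, rfl, hdd_false ℓ par hr⟩⟩
    · right
      refine ⟨n, ?_⟩
      have e : Fperm π u v L x = hdd ℓ par (lo n) (e1 n) (h1 n) := by
        rw [h.2]; exact basePerm_tl ℓ par _ _ _
      rw [e, h.1]
      have hp := hpar n
      rcases hq : par (lo n) with _ | _
      · have hr : par (up n) = true := by rw [hq] at hp; simpa using hp.symm
        exact ⟨0, Or.inr ⟨rfl, tl_true ℓ par hr, rfl, hdd_false ℓ par hq⟩⟩
      · have hr : par (up n) = false := by rw [hq] at hp; simpa using hp.symm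
        exact ⟨1, Or.inr ⟨rfl, tl_false ℓ par hr, rfl, hdd_true ℓ par hq⟩⟩

end cliques

lemma perm_chain {V : Type*} [Fintype V] [Nonempty V] (g : Equiv.Perm V)
    (hg : ∀ x y, g.SameCycle x y) (val : V → ℕ) (hval : Function.Injective val)
    (hadj : ∀ x, val x ∣ val (g x) ∨ val (g x) ∣ val x) :
    ∃ l : List ℕ, l.Nodup ∧ l.IsChain (fun a b => a ∣ b ∨ b ∣ a) ∧ l.length = Fintype.card V ∧
      ∀ n ∈ l, ∃ x, n = val x := by
  obtain ⟨r⟩ := ‹Nonempty V›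
  have hc : g.IsCycleOn ((Finset.univ : Finset V) : Set V) := by
    refine ⟨by simpa using g.bijective, fun x _ y _ => hg x y⟩
  refine ⟨(List.range (Fintype.card V)).map (fun i => val ((g ^ i) r)), ?_, ?_, by simp, ?_⟩
  · rw [List.nodup_map_iff_inj_on List.nodup_range]
    intro a ha b hb hab
    rw [List.mem_range] at ha hb
    have h1 := (hc.pow_apply_eq_pow_apply (Finset.mem_univ r)).1 (hval hab)
    rw [Finset.card_univ] at h1
    exact Nat.ModEq.eq_of_lt_of_lt h1 ha hb
  · rw [List.isChain_map, List.isChain_range]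
    intro i _
    have : (g ^ i.succ) r = g ((g ^ i) r) := by rw [pow_succ', Equiv.Perm.mul_apply]
    rw [this]
    exact hadj _
  · intro n hn
    rw [List.mem_map] at hn
    obtain ⟨i, -, rfl⟩ := hn
    exact ⟨_, rfl⟩


lemma foldr_max_le_iff (l : List ℕ) (X : ℕ) : l.foldr max 1 ≤ X ↔ 1 ≤ X ∧ ∀ a ∈ l, a ≤ X := by
  induction l with
  | nil => simp
  | cons a l ih => simp [ih]; tauto

lemma rough_list_prod {l : List ℕ} {u : ℕ} (h : ∀ a ∈ l, a.Prime ∧ u ≤ a) : Rough u l.prod := by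
  intro p hp hd
  rw [Prime.dvd_prod_iff hp.prime] at hd
  obtain ⟨a, ha, hd⟩ := hd
  rw [(Nat.prime_dvd_prime_iff_eq hp (h a ha).1).1 hd]
  exact (h a ha).2

lemma smo_list_prod {l : List ℕ} {u : ℕ} (h : ∀ a ∈ l, a.Prime ∧ a < u) : Smo u l.prod := by
  intro p hp hd
  rw [Prime.dvd_prod_iff hp.prime] at hd
  obtain ⟨a, ha, hd⟩ := hd
  rw [(Nat.prime_dvd_prime_iff_eq hp (h a ha).1).1 hd]
  exact (h a ha).2

lemma SS_le_iff {n X : ℕ} (hn : n ≠ 0) :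
    SS n ≤ X ↔ 1 ≤ X ∧ ∀ q : ℕ, q.Prime → q ∣ n → q * n ≤ X * sm n q := by
  unfold SS
  rw [foldr_max_le_iff]
  apply and_congr_right
  intro hX
  set l := n.primeFactorsList with hl
  have hprod : l.prod = n := Nat.prod_primeFactorsList hn
  have hpr : ∀ a ∈ l, a.Prime := fun a ha => Nat.prime_of_mem_primeFactorsList ha
  have hsort : l.Pairwise (· ≤ ·) := (Nat.primeFactorsList_sorted n).pairwise
  have htd : ∀ j, (l.take j).prod * (l.drop j).prod = n := by
    intro j; rw [← List.prod_append, List.take_append_drop, hprod]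
  simp only [List.mem_map, List.mem_range]
  constructor
  · intro h q hq hd
    have hmem : q ∈ l := (Nat.mem_primeFactorsList hn).2 ⟨hq, hd⟩
    have hj : l.idxOf q < l.length := List.idxOf_lt_length_iff.2 hmem
    have h1 := h _ ⟨l.idxOf q, hj, rfl⟩
    have hdrop : l.drop (l.idxOf q) = q :: l.drop (l.idxOf q + 1) := by
      rw [List.drop_eq_getElem_cons hj, List.getElem_idxOf]
    have hhead : (l.drop (l.idxOf q)).headI = q := by rw [hdrop]; rfl
    rw [hhead] at h1
    have hsplit : l = l.take (l.idxOf q) ++ l.drop (l.idxOf q) := (List.take_append_drop _ _).symm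
    have hsort2 := hsort
    rw [hsplit, List.pairwise_append] at hsort2
    have hR : Rough q (l.drop (l.idxOf q)).prod := by
      apply rough_list_prod
      intro a ha
      refine ⟨hpr a (List.mem_of_mem_drop ha), ?_⟩
      have h3 := hsort2.2.1
      rw [hdrop, List.pairwise_cons] at h3
      rw [hdrop, List.mem_cons] at ha
      rcases ha with rfl | ha
      · exact le_rfl
      · exact h3.1 a ha
    have hS : Smo q (l.take (l.idxOf q)).prod := by
      apply smo_list_prod
      intro a ha
      refine ⟨hpr a (List.mem_of_mem_take ha), ?_⟩
      have h3 := hsort2.2.2 a ha q (by rw [hdrop]; simp)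
      refine lt_of_le_of_ne h3 ?_
      intro he
      rw [he] at ha
      have := (List.mem_take_iff_idxOf_lt hmem).1 ha
      omega
    have hsm : sm n q = (l.take (l.idxOf q)).prod := by
      have := htd (l.idxOf q)
      rw [mul_comm] at this
      rw [← this]
      exact sm_eq (by rw [this]; exact hn) hR hS
    rw [hsm]
    calc q * n = (q * (l.drop (l.idxOf q)).prod) * (l.take (l.idxOf q)).prod := by
          conv_lhs => rw [← htd (l.idxOf q)]
          ring
      _ ≤ _ := Nat.mul_le_mul_right _ h1
  · rintro h a ⟨j, hj, rfl⟩
    have hdrop : l.drop j = l[j] :: l.drop (j + 1) := List.drop_eq_getElem_cons hj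
    have hhead : (l.drop j).headI = l[j] := by rw [hdrop]; rfl
    rw [hhead]
    set q := l[j] with hq
    have hql : q ∈ l := List.getElem_mem hj
    have hqd : q ∣ n := Nat.dvd_of_mem_primeFactorsList hql
    have h1 := h q (hpr q hql) hqd
    have hsort2 := hsort
    rw [← List.take_append_drop j l, List.pairwise_append] at hsort2
    have hR : Rough q (l.drop j).prod := by
      apply rough_list_prod
      intro a ha
      refine ⟨hpr a (List.mem_of_mem_drop ha), ?_⟩
      have h3 := hsort2.2.1
      rw [hdrop, List.pairwise_cons] at h3
      rw [hdrop, List.mem_cons] at ha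
      rcases ha with rfl | ha
      · exact le_rfl
      · exact h3.1 a ha
    have hdv : (l.drop j).prod * sm n q ∣ n := by
      apply Nat.Coprime.mul_dvd_of_dvd_of_dvd (rough_smo_coprime hR (sm_smo n q)) _ (sm_dvd n q hn)
      exact ⟨_, by rw [mul_comm]; exact (htd j).symm⟩
    have hle := Nat.le_of_dvd (Nat.pos_of_ne_zero hn) hdv
    have h2 : q * (l.drop j).prod * sm n q ≤ X * sm n q := by
      calc q * (l.drop j).prod * sm n q = q * ((l.drop j).prod * sm n q) := by ring
        _ ≤ q * n := Nat.mul_le_mul_left _ hle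
        _ ≤ _ := h1
    exact Nat.le_of_mul_le_mul_right h2 (sm_pos n q)

lemma Pmax_le_iff {n : ℕ} {y : ℝ} (hn : n ≠ 0) (hy : 1 ≤ y) :
    (Pmax n : ℝ) ≤ y ↔ ∀ q : ℕ, q.Prime → q ∣ n → (q : ℝ) ≤ y := by
  unfold Pmax
  split_ifs with h
  · have : n = 1 := by omega
    subst this
    simp only [Nat.cast_one, hy, true_iff]
    intro q hq hd
    exact absurd (Nat.dvd_one.1 hd) hq.ne_one
  · rw [← Nat.le_floor_iff (by linarith), Finset.sup_le_iff]
    simp only [id]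
    constructor
    · intro H q hq hd
      exact (Nat.le_floor_iff (by linarith)).1 (H q (Nat.mem_primeFactors.2 ⟨hq, hd, hn⟩))
    · intro H q hq
      exact (Nat.le_floor_iff (by linarith)).2
        (H q (Nat.prime_of_mem_primeFactors hq) (Nat.dvd_of_mem_primeFactors hq))

/-- nodes -/
def Node (M Y : ℕ) (y : ℝ) (n : ℕ) : Prop :=
  n ≠ 0 ∧ ¬ 2 ∣ n ∧ M * n ≤ Y ∧ ∀ q : ℕ, q.Prime → q ∣ n → (q : ℝ) ≤ y ∧ M * (q * n) ≤ Y * sm n q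

lemma node_of_mem {M n : ℕ} {x y : ℝ} (hM : 1 ≤ M) (hx : 8 ≤ x) (hy : 2 ≤ y)
    (h : 1 ≤ n ∧ (n : ℝ) ≤ x / M ∧ (Pmax n : ℝ) ≤ y ∧
    (∀ p : ℕ, p.Prime → p ∣ n → 2 < (p : ℝ)) ∧ (SS n : ℝ) ≤ x / M) : Node M ⌊x⌋₊ y n := by
  obtain ⟨h1, h2, h3, h4, h5⟩ := h
  have hM' : (0:ℝ) < M := by exact_mod_cast hM
  have hn : n ≠ 0 := by omega
  refine ⟨hn, ?_, ?_, ?_⟩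
  · intro hd
    have := h4 2 Nat.prime_two hd
    norm_num at this
  · rw [Nat.le_floor_iff (by linarith)]
    rw [le_div_iff₀ hM'] at h2
    push_cast; linarith
  · intro q hq hd
    refine ⟨(Pmax_le_iff hn (by linarith)).1 h3 q hq hd, ?_⟩
    have h6 := ((SS_le_iff hn).1 (le_refl (SS n))).2 q hq hd
    have h7 : M * SS n ≤ ⌊x⌋₊ := by
      rw [Nat.le_floor_iff (by linarith)]
      rw [le_div_iff₀ hM'] at h5
      push_cast; linarith
    calc M * (q * n) ≤ M * (SS n * sm n q) := Nat.mul_le_mul_left _ h6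
      _ = (M * SS n) * sm n q := by ring
      _ ≤ _ := Nat.mul_le_mul_right _ h7

lemma vertex_ok {M o k : ℕ} {x y : ℝ} (hM : 1 ≤ M) (hx : 8 ≤ x) (hy : 2 ≤ y)
    (h : Node M ⌊x⌋₊ y o) (hlo : Nat.sqrt ⌊x⌋₊ < o * 2 ^ k) (hhi : 2 * (o * 2 ^ k) ≤ ⌊x⌋₊) :
    1 ≤ o * 2 ^ k ∧ (SS (o * 2 ^ k) : ℝ) ≤ x ∧ Real.sqrt x < ((o * 2 ^ k : ℕ) : ℝ) ∧
      ((o * 2 ^ k : ℕ) : ℝ) ≤ x ∧ (Pmax (o * 2 ^ k) : ℝ) ≤ y := by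
  obtain ⟨h1, h2, h3, h4⟩ := h
  have h2k : 2 ^ k ≠ 0 := by positivity
  have hv : o * 2 ^ k ≠ 0 := mul_ne_zero h1 h2k
  have hx0 : (0:ℝ) ≤ x := by linarith
  have hq : ∀ q : ℕ, q.Prime → q ∣ o * 2 ^ k → q = 2 ∨ (q ≠ 2 ∧ q ∣ o) := by
    intro q hq hd
    by_cases hq2 : q = 2
    · left; exact hq2
    · right
      refine ⟨hq2, ?_⟩
      rcases (hq.dvd_mul).1 hd with h | h
      · exact h
      · exact absurd ((Nat.prime_dvd_prime_iff_eq hq Nat.prime_two).1 (hq.dvd_of_dvd_pow h)) hq2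
  refine ⟨Nat.pos_of_ne_zero hv, ?_, ?_, ?_, ?_⟩
  · rw [← Nat.le_floor_iff hx0, SS_le_iff hv]
    refine ⟨by omega, ?_⟩
    intro q hqp hd
    rcases hq q hqp hd with rfl | ⟨hq2, hqo⟩
    · exact hhi.trans (Nat.le_mul_of_pos_right _ (sm_pos _ _))
    · rw [sm_mul h1 h2k]
      have h2q : 2 < q := lt_of_le_of_ne hqp.two_le (Ne.symm hq2)
      have : sm (2 ^ k) q = 2 ^ k := by
        apply sm_of_smo h2k
        intro r hr hrd
        rw [(Nat.prime_dvd_prime_iff_eq hr Nat.prime_two).1 (hr.dvd_of_dvd_pow hrd)]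
        exact h2q
      rw [this]
      have h5 := (h4 q hqp hqo).2
      have h6 : q * o ≤ M * (q * o) := Nat.le_mul_of_pos_left _ hM
      calc q * (o * 2 ^ k) = (q * o) * 2 ^ k := by ring
        _ ≤ (⌊x⌋₊ * sm o q) * 2 ^ k := Nat.mul_le_mul_right _ (h6.trans h5)
        _ = _ := by ring
  · rw [Real.sqrt_lt' (by exact_mod_cast Nat.pos_of_ne_zero hv)]
    rw [Nat.sqrt_lt'] at hlo
    rw [Nat.floor_lt hx0] at hlo
    exact_mod_cast hlo
  · rw [← Nat.le_floor_iff hx0]; omega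
  · rw [Pmax_le_iff hv (by linarith)]
    intro q hqp hd
    rcases hq q hqp hd with rfl | ⟨-, hqo⟩
    · exact_mod_cast hy
    · exact (h4 q hqp hqo).1


lemma Node.of_dvd {M Y a b : ℕ} {y : ℝ} (h : Node M Y y b) (hd : a ∣ b) : Node M Y y a := by
  obtain ⟨h1, h2, h3, h4⟩ := h
  obtain ⟨c, rfl⟩ := hd
  have ha : a ≠ 0 := left_ne_zero_of_mul h1
  have hc : c ≠ 0 := right_ne_zero_of_mul h1
  refine ⟨ha, fun h => h2 (h.mul_right c), ?_, ?_⟩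
  · refine le_trans (Nat.mul_le_mul_left _ ?_) h3
    exact Nat.le_mul_of_pos_right _ (Nat.pos_of_ne_zero hc)
  · intro q hq hqa
    have h5 := h4 q hq (hqa.mul_right c)
    refine ⟨h5.1, ?_⟩
    have h6 := h5.2
    rw [sm_mul ha hc] at h6
    have h7 : sm c q ≤ c := Nat.le_of_dvd (Nat.pos_of_ne_zero hc) (sm_dvd c q hc)
    apply Nat.le_of_mul_le_mul_right _ (Nat.pos_of_ne_zero hc)
    calc M * (q * a) * c = M * (q * (a * c)) := by ring
      _ ≤ Y * (sm a q * sm c q) := h6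
      _ ≤ Y * (sm a q * c) := by gcongr
      _ = _ := by ring

lemma rough_minFac (n : ℕ) : Rough n.minFac n := fun _ hp hd => Nat.minFac_le_of_dvd hp.two_le hd

lemma Node.minFac_spec {M Y n : ℕ} {y : ℝ} (h : Node M Y y n) (hn1 : n ≠ 1) :
    n.minFac.Prime ∧ 3 ≤ n.minFac ∧ M * (n.minFac * n) ≤ Y ∧ (n.minFac : ℝ) ≤ y := by
  have hp := Nat.minFac_prime hn1
  have hd := Nat.minFac_dvd n
  have h3 : 3 ≤ n.minFac := by
    have h2 := hp.two_le
    rcases Nat.lt_or_ge 2 n.minFac with h' | h'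
    · exact h'
    · have : n.minFac = 2 := by omega
      exact absurd (this ▸ hd) h.2.1
  have h5 := h.2.2.2 _ hp hd
  rw [sm_of_rough h.1 (rough_minFac n), mul_one] at h5
  exact ⟨hp, h3, h5.2, h5.1⟩

lemma Node.up {M Y n m : ℕ} {y : ℝ} (h : Node M Y y n) (hn1 : n ≠ 1)
    (hm0 : m ≠ 0) (hm2 : ¬ 2 ∣ m) (hms : Smo n.minFac m) (hmp : m ≤ n.minFac)
    (hmq : ∀ q : ℕ, q.Prime → q ∣ m → q * m ≤ n.minFac * sm m q) : Node M Y y (n * m) := by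
  obtain ⟨hp, h3, hMn, hpy⟩ := h.minFac_spec hn1
  refine ⟨mul_ne_zero h.1 hm0, ?_, ?_, ?_⟩
  · intro hd
    rcases (Nat.prime_two.dvd_mul).1 hd with h' | h'
    · exact h.2.1 h'
    · exact hm2 h'
  · refine le_trans (Nat.mul_le_mul_left _ ?_) hMn
    rw [mul_comm n.minFac]
    exact Nat.mul_le_mul_left _ hmp
  · intro q hq hd
    rw [sm_mul h.1 hm0]
    by_cases hqm : q ∣ m
    · have hqp := hms q hq hqm
      refine ⟨le_trans (by exact_mod_cast hqp.le) hpy, ?_⟩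
      rw [sm_of_rough h.1 ((rough_minFac n).mono hqp.le), one_mul]
      calc M * (q * (n * m)) = M * n * (q * m) := by ring
        _ ≤ M * n * (n.minFac * sm m q) := Nat.mul_le_mul_left _ (hmq q hq hqm)
        _ = M * (n.minFac * n) * sm m q := by ring
        _ ≤ _ := Nat.mul_le_mul_right _ hMn
    · have hqn : q ∣ n := ((hq.dvd_mul).1 hd).resolve_right hqm
      have h5 := h.2.2.2 q hq hqn
      refine ⟨h5.1, ?_⟩
      have hpq : n.minFac ≤ q := Nat.minFac_le_of_dvd hq.two_le hqn
      rw [sm_of_smo hm0 (hms.mono hpq)]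
      calc M * (q * (n * m)) = M * (q * n) * m := by ring
        _ ≤ Y * sm n q * m := Nat.mul_le_mul_right _ h5.2
        _ = _ := by ring

lemma conn (D : ℕ → Prop) (r : ℕ → ℕ → Prop) (hr : ∀ a, D a → r a a)
    (hs : ∀ a b, r a b → r b a) (ht : ∀ a b c, r a b → r b c → r a c)
    (hD0 : ∀ a, D a → a ≠ 0) (hDd : ∀ a b, D b → a ∣ b → D a)
    (he : ∀ n, D n → n ≠ 1 → ∃ m, m ≠ 0 ∧ Smo n.minFac m ∧ D (n * m) ∧
      r (n / n.minFac * m) (n * m)) : ∀ n, D n → r n 1 := by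
  have key : ∀ p n, D n → n ≠ 1 → n.minFac = p → r n (n / n.minFac) := by
    intro p
    induction p using Nat.strong_induction_on with
    | _ p ih =>
      have sub : ∀ c a, Rough p a → Smo p c → D (a * c) → r (a * c) a := by
        intro c
        induction c using Nat.strong_induction_on with
        | _ c ihc =>
          intro a ha hc hD
          have hac := hD0 _ hD
          have hc0 : c ≠ 0 := right_ne_zero_of_mul hac
          by_cases hc1 : c = 1
          · subst hc1; rw [mul_one] at hD ⊢; exact hr a hD
          · have hq := Nat.minFac_prime hc1
            have hqd := Nat.minFac_dvd c
            have hqp := hc _ hq hqd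
            have hac1 : a * c ≠ 1 := fun h => hc1 (Nat.eq_one_of_mul_eq_one_left h)
            have hmin : (a * c).minFac = c.minFac := by
              apply le_antisymm
              · exact Nat.minFac_le_of_dvd hq.two_le (hqd.mul_left a)
              · have h1 := Nat.minFac_prime hac1
                rcases (h1.dvd_mul).1 (Nat.minFac_dvd (a * c)) with h2 | h2
                · exact (hqp.le).trans (ha _ h1 h2)
                · exact Nat.minFac_le_of_dvd h1.two_le h2
            have h1 := ih _ hqp (a * c) hD hac1 hmin
            rw [hmin, Nat.mul_div_assoc _ hqd] at h1
            refine ht _ _ _ h1 ?_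
            have hdv : c / c.minFac ∣ c := Nat.div_dvd_of_dvd hqd
            exact ihc _ (Nat.div_lt_self (Nat.pos_of_ne_zero hc0) hq.one_lt) a ha (hc.dvd hdv)
              (hDd _ _ hD (Nat.mul_dvd_mul_left a hdv))
      intro n hD hn1 hp
      obtain ⟨m, hm0, hms, hDm, hrm⟩ := he n hD hn1
      have hR : Rough p n := hp ▸ rough_minFac n
      have hdv : n / n.minFac ∣ n := Nat.div_dvd_of_dvd (Nat.minFac_dvd n)
      rw [hp] at hms
      have h1 := sub m n hR hms hDm
      have h2 := sub m (n / n.minFac) (hR.dvd hdv) hms (hDd _ _ hDm (Nat.mul_dvd_mul_right hdv m))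
      exact ht _ _ _ (hs _ _ h1) (ht _ _ _ (hs _ _ hrm) h2)
  intro n
  induction n using Nat.strong_induction_on with
  | _ n ih =>
    intro hD
    by_cases hn1 : n = 1
    · subst hn1; exact hr _ hD
    · refine ht _ _ _ (key _ n hD hn1 rfl) (ih _ ?_ ?_)
      · exact Nat.div_lt_self (Nat.pos_of_ne_zero (hD0 n hD)) (Nat.minFac_prime hn1).one_lt
      · exact hDd _ _ hD (Nat.div_dvd_of_dvd (Nat.minFac_dvd n))

lemma exists_ab {Y o : ℕ} (ho : o ≠ 0) (hY : 16 ≤ Y) (h : 2 * o ≤ Y) :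
    ∃ al : ℕ × ℕ, Nat.sqrt Y < o * 2 ^ al.1 ∧ 2 * (o * 2 ^ (al.1 + al.2)) ≤ Y ∧
      (∀ k, Nat.sqrt Y < o * 2 ^ k → al.1 ≤ k) ∧
      (∀ k, 2 * (o * 2 ^ k) ≤ Y → k ≤ al.1 + al.2) := by
  have hop := Nat.pos_of_ne_zero ho
  have hex : ∃ k, Nat.sqrt Y < o * 2 ^ k :=
    ⟨Nat.sqrt Y, lt_of_lt_of_le Nat.lt_two_pow_self (Nat.le_mul_of_pos_left _ hop)⟩
  classical
  set a := Nat.find hex with ha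
  have ha1 : Nat.sqrt Y < o * 2 ^ a := Nat.find_spec hex
  have ha2 : ∀ k, Nat.sqrt Y < o * 2 ^ k → a ≤ k := fun k hk => Nat.find_min' hex hk
  have h4 : 4 ≤ Nat.sqrt Y := by rw [Nat.le_sqrt]; omega
  have hsq := Nat.sqrt_le Y
  have haY : 2 * (o * 2 ^ a) ≤ Y := by
    rcases Nat.eq_zero_or_pos a with h0 | h0
    · rw [h0]; simpa using h
    · have : ¬ Nat.sqrt Y < o * 2 ^ (a - 1) := fun hh => by have := ha2 _ hh; omega
      push Not at this
      have e : 2 ^ a = 2 * 2 ^ (a - 1) := by rw [← pow_succ']; congr 1; omega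
      rw [e]
      nlinarith
  have hbd : ∀ k, 2 * (o * 2 ^ k) ≤ Y → k ≤ Y := by
    intro k hk
    have : k < 2 ^ k := Nat.lt_two_pow_self
    nlinarith
  set b := Nat.findGreatest (fun k => 2 * (o * 2 ^ k) ≤ Y) Y with hb
  have hb1 : 2 * (o * 2 ^ b) ≤ Y :=
    Nat.findGreatest_spec (P := fun k => 2 * (o * 2 ^ k) ≤ Y) (hbd a haY) haY
  have hb2 : ∀ k, 2 * (o * 2 ^ k) ≤ Y → k ≤ b := fun k hk =>
    Nat.le_findGreatest (hbd k hk) hk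
  have hab := hb2 a haY
  refine ⟨(a, b - a), ha1, ?_, ha2, ?_⟩
  · simp only
    rwa [Nat.add_sub_cancel' hab]
  · simp only
    rwa [Nat.add_sub_cancel' hab]

lemma exists_k {Y P p m s S : ℕ} (hP : P ≠ 0) (hm : m ≠ 0) (hp : p ≠ 0) (hmp : m ≤ p)
    (hs : s ≤ S) (hs2 : 2 ≤ s) (hM : 4 ^ (S + 2) * (p * (P * p)) ≤ Y) :
    ∃ k, P * p * m * (2 ^ k * 2 ^ s) ≤ Y ∧ Y < P * p * m * (2 ^ k * 2 ^ (s + 1)) ∧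
      Nat.sqrt Y < P * m * 2 ^ k ∧ 2 * (P * p * m * 2 ^ (k + 1)) ≤ Y := by
  set N := P * p * m with hN
  have hN0 : 0 < N := by positivity
  have h24 : 4 ^ (s + 1) ≤ 4 ^ (S + 2) := Nat.pow_le_pow_right (by norm_num) (by omega)
  have h2s : 2 ^ s ≤ 4 ^ (s + 1) := by
    calc 2 ^ s ≤ 4 ^ s := Nat.pow_le_pow_left (by norm_num) s
      _ ≤ _ := Nat.pow_le_pow_right (by norm_num) (by omega)
  have hNs : N * 2 ^ s ≤ Y := by
    calc N * 2 ^ s ≤ P * p * p * 4 ^ (S + 2) :=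
          Nat.mul_le_mul (Nat.mul_le_mul_left _ hmp) (h2s.trans h24)
      _ = 4 ^ (S + 2) * (p * (P * p)) := by ring
      _ ≤ Y := hM
  have hdiv : 2 ^ s ≤ Y / N := by rw [Nat.le_div_iff_mul_le hN0]; linarith
  have hne : Y / N ≠ 0 := by have := Nat.two_pow_pos s; omega
  have hsl : s ≤ Nat.log 2 (Y / N) := by
    apply Nat.le_log_of_pow_le (by norm_num) hdiv
  have h1 := Nat.pow_log_le_self 2 hne
  have h2 := Nat.lt_pow_succ_log_self (b := 2) (by norm_num) (Y / N)
  obtain ⟨k, hk⟩ := Nat.exists_eq_add_of_le hsl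
  rw [hk] at h1 h2
  rw [Nat.le_div_iff_mul_le hN0] at h1
  rw [Nat.div_lt_iff_lt_mul hN0] at h2
  have A : N * (2 ^ k * 2 ^ s) ≤ Y := by
    rw [pow_add] at h1; nlinarith
  have B : Y < N * (2 ^ k * 2 ^ (s + 1)) := by
    have : 2 ^ (s + k + 1) = 2 ^ k * 2 ^ (s + 1) := by rw [← pow_add]; congr 1; omega
    rw [Nat.succ_eq_add_one, this] at h2; linarith
  refine ⟨k, A, B, ?_, ?_⟩
  · by_contra hcon
    push Not at hcon
    have h5 : p * 2 ^ (s + 1) ≤ Nat.sqrt Y := by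
      rw [Nat.le_sqrt]
      calc p * 2 ^ (s + 1) * (p * 2 ^ (s + 1)) = (2 * 2) ^ (s + 1) * (p * (1 * p)) := by
            rw [mul_pow]; ring
        _ ≤ 4 ^ (S + 2) * (p * (P * p)) := by
            apply Nat.mul_le_mul h24
            gcongr
            exact Nat.pos_of_ne_zero hP
        _ ≤ Y := hM
    have h6 := Nat.mul_le_mul hcon h5
    have h7 := Nat.sqrt_le Y
    have h8 : N * (2 ^ k * 2 ^ (s + 1)) = P * m * 2 ^ k * (p * 2 ^ (s + 1)) := by rw [hN]; ring
    omega
  · refine le_trans ?_ A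
    have : 2 ^ 2 ≤ 2 ^ s := Nat.pow_le_pow_right (by norm_num) hs2
    calc 2 * (N * 2 ^ (k + 1)) = N * (2 ^ k * 2 ^ 2) := by ring
      _ ≤ _ := by gcongr


lemma pow_window {e s s' Y : ℕ} (h1 : e * 2 ^ s ≤ Y) (h2 : Y < e * 2 ^ (s' + 1)) : s ≤ s' := by
  by_contra h
  push Not at h
  have : 2 ^ (s' + 1) ≤ 2 ^ s := Nat.pow_le_pow_right (by norm_num) h
  have := Nat.mul_le_mul_left e this
  omega

lemma odd_mul_pow_inj {o o' k k' : ℕ} (ho : ¬ 2 ∣ o) (ho' : ¬ 2 ∣ o')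
    (h : o * 2 ^ k = o' * 2 ^ k') : o = o' ∧ k = k' := by
  have hr : ∀ {o : ℕ}, ¬ 2 ∣ o → Rough 3 o := by
    intro o ho q hq hd
    have := hq.two_le
    rcases Nat.lt_or_ge 2 q with h | h
    · exact h
    · have : q = 2 := by omega
      exact absurd (this ▸ hd) ho
  have hs : ∀ k : ℕ, Smo 3 (2 ^ k) := by
    intro k q hq hd
    rw [(Nat.prime_dvd_prime_iff_eq hq Nat.prime_two).1 (hq.dvd_of_dvd_pow hd)]
    norm_num
  have := decomp_unique h (hr ho) (hs k) (hr ho') (hs k')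
  exact ⟨this.1, Nat.pow_right_injective le_rfl this.2⟩

lemma big {S : ℕ} {m s : ℕ → ℕ} (hslots : ∀ p : ℕ, p.Prime → 3 ≤ p →
    m p ≠ 0 ∧ ¬ 2 ∣ m p ∧ Smo p (m p) ∧ m p ≤ p ∧
    (∀ q : ℕ, q.Prime → q ∣ m p → q * m p ≤ p * sm (m p) q) ∧ 2 ≤ s p ∧ s p ≤ S ∧
    ∀ p' : ℕ, p'.Prime → 3 ≤ p' → ∀ o : ℕ, o ≠ 0 → sm o p = m p → sm o p' = m p' →
      (p ∣ o → p' ∣ o → s p = s p' → p = p') ∧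
      (p * 2 ^ s p < p' * 2 ^ (s p' + 1) → p' * 2 ^ s p' < p * 2 ^ (s p + 1) → p = p') ∧
      (p' ∣ o → p * 2 ^ s p < 2 ^ (s p' + 1) → 2 ^ s p' < p * 2 ^ (s p + 1) → False))
    {Y : ℕ} {y : ℝ} (hone : Node (4 ^ (S + 2)) Y y 1) :
    ∃ l : List ℕ, l.Nodup ∧ l.IsChain (fun a b => a ∣ b ∨ b ∣ a) ∧
      {n | Node (4 ^ (S + 2)) Y y n}.ncard ≤ l.length ∧
      ∀ n ∈ l, ∃ o k, n = o * 2 ^ k ∧ Node (4 ^ (S + 2)) Y y o ∧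
        Nat.sqrt Y < o * 2 ^ k ∧ 2 * (o * 2 ^ k) ≤ Y := by
  classical
  have hM16 : 16 ≤ 4 ^ (S + 2) := by
    calc 16 = 4 ^ 2 := by norm_num
      _ ≤ _ := Nat.pow_le_pow_right (by norm_num) (by omega)
  set M := 4 ^ (S + 2) with hMdef
  have hY16 : 16 ≤ Y := by have := hone.2.2.1; omega
  let O := {n // Node M Y y n}
  have hle : ∀ n, Node M Y y n → n ≤ Y := by
    intro n h
    have := h.2.2.1
    nlinarith
  have hfin : {n | Node M Y y n}.Finite := (Set.finite_Iic Y).subset (fun n h => hle n h)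
  have : Finite O := hfin
  have : Fintype O := Fintype.ofFinite O
  have : Nonempty O := ⟨⟨1, hone⟩⟩
  -- the intervals
  have hab : ∀ o : O, ∃ al : ℕ × ℕ, Nat.sqrt Y < o.1 * 2 ^ al.1 ∧
      2 * (o.1 * 2 ^ (al.1 + al.2)) ≤ Y ∧
      (∀ k, Nat.sqrt Y < o.1 * 2 ^ k → al.1 ≤ k) ∧
      (∀ k, 2 * (o.1 * 2 ^ k) ≤ Y → k ≤ al.1 + al.2) := by
    intro o
    apply exists_ab o.2.1 hY16
    have := o.2.2.2.1
    nlinarith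
  choose al hal1 hal2 hal3 hal4 using hab
  let ι := {n : O // n.1 ≠ 1}
  -- data for each edge
  have hdata : ∀ n : ι, ∃ (P p : ℕ) (lo up : O) (k : ℕ),
      p = n.1.1.minFac ∧ p.Prime ∧ 3 ≤ p ∧ P ≠ 0 ∧ n.1.1 = P * p ∧ lo.1 = P * m p ∧
      up.1 = n.1.1 * m p ∧ Rough p n.1.1 ∧
      up.1 * (2 ^ k * 2 ^ s p) ≤ Y ∧ Y < up.1 * (2 ^ k * 2 ^ (s p + 1)) ∧
      Nat.sqrt Y < lo.1 * 2 ^ k ∧ 2 * (up.1 * 2 ^ (k + 1)) ≤ Y := by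
    rintro ⟨⟨n, hn⟩, hn1⟩
    simp only at hn1 ⊢
    obtain ⟨hp, h3, hMp, hpy⟩ := hn.minFac_spec hn1
    obtain ⟨s1, s2, s3, s4, s5, s6, s7, -⟩ := hslots _ hp h3
    have hup := hn.up hn1 s1 s2 s3 s4 s5
    have hnP : n = n / n.minFac * n.minFac := (Nat.div_mul_cancel (Nat.minFac_dvd n)).symm
    have hP0 : n / n.minFac ≠ 0 := fun h => hn.1 (by rw [hnP, h, zero_mul])
    have hlo : Node M Y y (n / n.minFac * m n.minFac) :=
      hup.of_dvd (Nat.mul_dvd_mul_right (Nat.div_dvd_of_dvd (Nat.minFac_dvd n)) _)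
    obtain ⟨k, k1, k2, k3, k4⟩ := exists_k (Y := Y) hP0 s1 hp.ne_zero s4 s7 s6
      (by rw [← hnP]; exact hMp)
    rw [← hnP] at k1 k2 k4
    exact ⟨n / n.minFac, n.minFac, ⟨_, hlo⟩, ⟨_, hup⟩, k, rfl, hp, h3, hP0, hnP, rfl, rfl,
      rough_minFac n, k1, k2, k3, k4⟩
  choose P p lo up k hpm hp h3 hP0 hnP hloE hupE hR k1 k2 k3 k4 using hdata
  have hupp : ∀ n, (up n).1 = (lo n).1 * p n := by
    intro n; rw [hupE, hloE, hnP]; ring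
  have hal_lo : ∀ n, (al (lo n)).1 ≤ k n := fun n => hal3 _ _ (k3 n)
  have hal_up : ∀ n, (al (up n)).1 ≤ k n := fun n => hal3 _ _ (by
    refine lt_of_lt_of_le (k3 n) ?_
    rw [hupp]
    have := (hp n).pos
    gcongr
    exact Nat.le_mul_of_pos_right _ this)
  have hbl_up : ∀ n, k n + 1 ≤ (al (up n)).1 + (al (up n)).2 := fun n => hal4 _ _ (k4 n)
  have hbl_lo : ∀ n, k n + 1 ≤ (al (lo n)).1 + (al (lo n)).2 := fun n => hal4 _ _ (by
    refine le_trans ?_ (k4 n)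
    rw [hupp]
    have := (hp n).pos
    gcongr
    exact Nat.le_mul_of_pos_right _ this)
  have hms : ∀ n, Smo (p n) (m (p n)) := fun n => (hslots _ (hp n) (h3 n)).2.2.1
  have hm0 : ∀ n, m (p n) ≠ 0 := fun n => (hslots _ (hp n) (h3 n)).1
  have hsm_up : ∀ n, sm (up n).1 (p n) = m (p n) := by
    intro n
    rw [hupE]
    exact sm_eq (by rw [← hupE]; exact (up n).2.1) (hR n) (hms n)
  have hsm_lo : ∀ n, sm (lo n).1 (p n) = m (p n) := by
    intro n
    rw [hloE]
    exact sm_eq (by rw [← hloE]; exact (lo n).2.1) ((hR n).dvd (hnP n ▸ Dvd.intro _ rfl)) (hms n)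
  have hpup : ∀ n, p n ∣ (up n).1 := fun n => by rw [hupp]; exact Dvd.intro_left _ rfl
  -- edge distinctness
  have hinj : ∀ n n', p n = p n' → (up n).1 = (up n').1 → n = n' := by
    intro n n' hpp huu
    rw [hupE, hupE, hpp] at huu
    exact Subtype.ext (Subtype.ext (Nat.eq_of_mul_eq_mul_right (Nat.pos_of_ne_zero (hm0 n')) huu))
  have d2 : ∀ n n', up n = up n' → k n = k n' → n = n' := by
    intro n n' hu hk
    have hss : s (p n) = s (p n') := by
      have a1 := k1 n; have a2 := k2 n; have b1 := k1 n'; have b2 := k2 n'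
      rw [← hu, ← hk] at b1 b2
      rw [← mul_assoc] at a1 a2 b1 b2
      exact le_antisymm (pow_window a1 b2) (pow_window b1 a2)
    have := ((hslots _ (hp n) (h3 n)).2.2.2.2.2.2.2 _ (hp n') (h3 n') (up n).1 (up n).2.1
      (hsm_up n) (hu ▸ hsm_up n')).1 (hpup n) (hu ▸ hpup n') hss
    exact hinj n n' this (by rw [hu])
  have d1 : ∀ n n', lo n = lo n' → k n = k n' → n = n' := by
    intro n n' hu hk
    have a1 := k1 n; have a2 := k2 n; have b1 := k1 n'; have b2 := k2 n'
    rw [hupp] at a1 a2 b1 b2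
    rw [← hu, ← hk] at b1 b2
    have c1 : p n * 2 ^ s (p n) < p n' * 2 ^ (s (p n') + 1) := by
      apply Nat.lt_of_mul_lt_mul_left (a := (lo n).1 * 2 ^ k n)
      calc (lo n).1 * 2 ^ k n * (p n * 2 ^ s (p n))
          = (lo n).1 * p n * (2 ^ k n * 2 ^ s (p n)) := by ring
        _ < _ := lt_of_le_of_lt a1 b2
        _ = _ := by ring
    have c2 : p n' * 2 ^ s (p n') < p n * 2 ^ (s (p n) + 1) := by
      apply Nat.lt_of_mul_lt_mul_left (a := (lo n).1 * 2 ^ k n)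
      calc (lo n).1 * 2 ^ k n * (p n' * 2 ^ s (p n'))
          = (lo n).1 * p n' * (2 ^ k n * 2 ^ s (p n')) := by ring
        _ < _ := lt_of_le_of_lt b1 a2
        _ = _ := by ring
    have := ((hslots _ (hp n) (h3 n)).2.2.2.2.2.2.2 _ (hp n') (h3 n') (lo n).1 (lo n).2.1
      (hsm_lo n) (hu ▸ hsm_lo n')).2.1 c1 c2
    exact hinj n n' this (by rw [hupp, hupp, hu, this])
  have d3 : ∀ n n', lo n = up n' → k n ≠ k n' := by
    intro n n' hu hk
    have a1 := k1 n; have a2 := k2 n; have b1 := k1 n'; have b2 := k2 n'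
    rw [hupp] at a1 a2
    rw [← hu, ← hk] at b1 b2
    have c1 : p n * 2 ^ s (p n) < 2 ^ (s (p n') + 1) := by
      apply Nat.lt_of_mul_lt_mul_left (a := (lo n).1 * 2 ^ k n)
      calc (lo n).1 * 2 ^ k n * (p n * 2 ^ s (p n))
          = (lo n).1 * p n * (2 ^ k n * 2 ^ s (p n)) := by ring
        _ < _ := lt_of_le_of_lt a1 b2
        _ = _ := by ring
    have c2 : 2 ^ s (p n') < p n * 2 ^ (s (p n) + 1) := by
      apply Nat.lt_of_mul_lt_mul_left (a := (lo n).1 * 2 ^ k n)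
      calc (lo n).1 * 2 ^ k n * (2 ^ s (p n'))
          = (lo n).1 * (2 ^ k n * 2 ^ s (p n')) := by ring
        _ < _ := lt_of_le_of_lt b1 a2
        _ = _ := by ring
    exact ((hslots _ (hp n) (h3 n)).2.2.2.2.2.2.2 _ (hp n') (h3 n') (lo n).1 (lo n).2.1
      (hsm_lo n) (hu ▸ hsm_up n')).2.2 (hu ▸ hpup n') c1 c2
  let par : O → Bool := fun o => decide (Even o.1.primeFactorsList.length)
  have hpar : ∀ n, par (lo n) ≠ par (up n) := by
    intro n
    have : (up n).1.primeFactorsList.length = (lo n).1.primeFactorsList.length + 1 := by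
      rw [hupp, (Nat.perm_primeFactorsList_mul (lo n).2.1 (hp n).ne_zero).length_eq,
        List.length_append, Nat.primeFactorsList_prime (hp n)]
      rfl
    simp only [par, this, Nat.even_add_one, ne_eq]
    by_cases h : Even (lo n).1.primeFactorsList.length <;> simp [h]
  let T : ι → Set O := fun n => {o | ∃ t, o.1 = n.1.1 * t ∧ Smo (p n + 1) t}
  obtain ⟨g, hg1, hg2⟩ := clique_merge (O := O) (fun o => (al o).2) par (ι := ι) lo up
    (fun n => k n - (al (lo n)).1) (fun n => k n - (al (up n)).1)
    (fun n => by have := hal_lo n; have := hbl_lo n; omega)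
    (fun n => by have := hal_up n; have := hbl_up n; omega)
    hpar
    (fun n n' h1 h2 => d1 n n' h1 (by
      have := hal_lo n; have := hal_lo n'; simp only [h1] at *; omega))
    (fun n n' h1 h2 => d2 n n' h1 (by
      have := hal_up n; have := hal_up n'; simp only [h1] at *; omega))
    (fun n n' h1 h2 => d3 n n' h1 (by
      have := hal_lo n; have := hal_up n'; simp only [h1] at *; omega))
    p T
    (fun n => ⟨m (p n), hupE n, (hms n).mono (Nat.le_succ _)⟩)
    (by
      rintro n ⟨t, ht, -⟩
      rw [hloE, hnP, mul_assoc] at ht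
      have h1 := Nat.eq_of_mul_eq_mul_left (Nat.pos_of_ne_zero (hP0 n)) ht
      have := hms n (p n) (hp n) (h1 ▸ Dvd.intro _ rfl)
      omega)
    (by
      intro n n' hne hle
      constructor
      · rintro ⟨t, ht, hts⟩
        refine ⟨t * p n', by rw [hupp, ht, mul_assoc], hts.mul (smo_prime (hp n') (by omega))⟩
      · rintro ⟨t, ht, hts⟩
        by_cases hd : p n' ∣ t
        · obtain ⟨t', rfl⟩ := hd
          refine ⟨t', ?_, hts.dvd (Dvd.intro_left _ rfl)⟩
          rw [hupp] at ht
          apply Nat.eq_of_mul_eq_mul_right (hp n').pos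
          rw [ht]; ring
        · exfalso
          have h1 : p n' ∣ n.1.1 * t := ht ▸ hpup n'
          have h2 := ((hp n').dvd_mul.1 h1).resolve_right hd
          have h4 := hR n _ (hp n') h2
          have h5 : p n' = p n := le_antisymm hle h4
          have hts' : Smo (p n) t := by
            intro q hq hqd
            have := hts q hq hqd
            rcases Nat.lt_or_ge q (p n) with h | h
            · exact h
            · have : q = p n' := by omega
              exact absurd (this ▸ hqd) hd
          rw [hupE] at ht
          have h6 := hR n'
          have h7 := hms n'
          rw [h5] at h6 h7 ht
          have := (decomp_unique ht h6 h7 (hR n) hts').1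
          exact hne (Subtype.ext (Subtype.ext this.symm)))
    (by
      intro r hr hedge
      have := conn (Node M Y y) (fun a b => ∃ (ha : Node M Y y a) (hb : Node M Y y b),
        r ⟨a, ha⟩ ⟨b, hb⟩) (fun a ha => ⟨ha, ha, hr.refl _⟩)
        (fun a b ⟨ha, hb, h⟩ => ⟨hb, ha, hr.symm h⟩)
        (fun a b c ⟨ha, hb, h⟩ ⟨hb', hc, h'⟩ => ⟨ha, hc, hr.trans h h'⟩)
        (fun a ha => ha.1) (fun a b hb hd => hb.of_dvd hd)
        (by
          intro n hn hn1
          let n' : ι := ⟨⟨n, hn⟩, hn1⟩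
          have e1 : p n' = n.minFac := hpm n'
          have e2 : n / n.minFac = P n' := by
            have : n = P n' * p n' := hnP n'
            rw [← e1]
            conv_lhs => rw [this]
            exact Nat.mul_div_cancel _ (hp n').pos
          refine ⟨m (p n'), hm0 n', e1 ▸ hms n', ?_, ?_⟩
          · have := (up n').2
            rwa [hupE] at this
          · rw [e2]
            have h1 := hedge n'
            have h2 : lo n' = ⟨P n' * m (p n'), by rw [← hloE]; exact (lo n').2⟩ :=
              Subtype.ext (hloE n')
            have h3 : up n' = ⟨n * m (p n'), by
                have := (up n').2
                rwa [hupE] at this⟩ := Subtype.ext (hupE n')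
            rw [h2, h3] at h1
            exact ⟨_, _, h1⟩)
      intro a b
      obtain ⟨_, _, h1⟩ := this a.1 a.2
      obtain ⟨_, _, h2⟩ := this b.1 b.2
      exact hr.trans h1 (hr.symm h2))
  let val : (Σ o : O, Fin ((al o).2 + 1)) → ℕ := fun v => v.1.1 * 2 ^ ((al v.1).1 + (v.2 : ℕ))
  have hval : Function.Injective val := by
    rintro ⟨o, i⟩ ⟨o', i'⟩ h
    have h1 := odd_mul_pow_inj o.2.2.1 o'.2.2.1 h
    have h2 : o = o' := Subtype.ext h1.1
    subst h2
    have h3 : i = i' := Fin.ext (by have := h1.2; simp only at this; omega)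
    rw [h3]
  have hadj : ∀ v, val v ∣ val (g v) ∨ val (g v) ∣ val v := by
    intro v
    have hlu : ∀ n j, (lo n).1 * 2 ^ j ∣ (up n).1 * 2 ^ j := by
      intro n j
      rw [hupp]
      exact Nat.mul_dvd_mul_right (Dvd.intro _ rfl) _
    rcases hg2 v with h | ⟨n, d, ⟨h1, h2, h3, h4⟩ | ⟨h1, h2, h3, h4⟩⟩
    · simp only [val, h]
      rcases le_total ((al v.1).1 + (v.2 : ℕ)) ((al v.1).1 + ((g v).2 : ℕ)) with h' | h'
      · left; exact Nat.mul_dvd_mul_left _ (pow_dvd_pow 2 h')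
      · right; exact Nat.mul_dvd_mul_left _ (pow_dvd_pow 2 h')
    · left
      simp only [val]
      rw [h2, h4, h1, h3]
      have e1 : (al (lo n)).1 + (k n - (al (lo n)).1 + d) = k n + d := by
        have := hal_lo n; omega
      have e2 : (al (up n)).1 + (k n - (al (up n)).1 + d) = k n + d := by
        have := hal_up n; omega
      rw [e1, e2]
      exact hlu _ _
    · right
      simp only [val]
      rw [h2, h4, h1, h3]
      have e1 : (al (lo n)).1 + (k n - (al (lo n)).1 + d) = k n + d := by
        have := hal_lo n; omega
      have e2 : (al (up n)).1 + (k n - (al (up n)).1 + d) = k n + d := by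
        have := hal_up n; omega
      rw [e1, e2]
      exact hlu _ _
  have : Nonempty (Σ o : O, Fin ((al o).2 + 1)) := ⟨⟨⟨1, hone⟩, 0⟩⟩
  obtain ⟨l, hl1, hl2, hl3, hl4⟩ := perm_chain g hg1 val hval hadj
  refine ⟨l, hl1, hl2, ?_, ?_⟩
  · rw [hl3]
    have h1 : {n | Node M Y y n}.ncard = Fintype.card O := by
      rw [← Nat.card_coe_set_eq]; exact Nat.card_eq_fintype_card (α := O)
    rw [h1]
    apply Fintype.card_le_of_injective (fun o : O => (⟨o, 0⟩ : Σ o : O, Fin ((al o).2 + 1)))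
    intro a b h
    exact congrArg Sigma.fst h
  · intro n hn
    obtain ⟨⟨o, i⟩, hx⟩ := hl4 n hn
    refine ⟨o.1, (al o).1 + (i : ℕ), hx, o.2, ?_, ?_⟩
    · refine lt_of_lt_of_le (hal1 o) (Nat.mul_le_mul_left _ ?_)
      exact Nat.pow_le_pow_right (by norm_num) (by omega)
    · refine le_trans ?_ (hal2 o)
      refine Nat.mul_le_mul_left _ (Nat.mul_le_mul_left _ ?_)
      exact Nat.pow_le_pow_right (by norm_num) (by omega)

lemma chain_len_bdd {x : ℝ} (Q : ℕ → Prop) (hx : 0 ≤ x) (hQ : ∀ n, Q n → (n : ℝ) ≤ x) :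
    BddAbove {L : ℕ | ∃ l : List ℕ, IsDivChain l ∧ (∀ n ∈ l, Q n) ∧ l.length = L} := by
  refine ⟨⌊x⌋₊ + 1, ?_⟩
  rintro L ⟨l, hl, hq, rfl⟩
  rw [← List.toFinset_card_of_nodup hl.1, ← Finset.card_range (⌊x⌋₊ + 1)]
  apply Finset.card_le_card
  intro n hn
  rw [Finset.mem_range, Nat.lt_succ_iff, Nat.le_floor_iff hx]
  exact hQ n (hq n (List.mem_toFinset.1 hn))

theorem stmt_3 : ∃ M : ℝ, 1 ≤ M ∧ ∀ x y : ℝ, 8 ≤ x → 2 ≤ y →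
    faxyStar x y ≤ faxy x y ∧ Axyz (x / M) y 2 ≤ faxyStar x y := by
  obtain ⟨S, m, s, hslots⟩ := slots
  have hM1 : 1 ≤ 4 ^ (S + 2) := Nat.one_le_pow _ _ (by norm_num)
  refine ⟨((4 ^ (S + 2) : ℕ) : ℝ), by exact_mod_cast hM1, ?_⟩
  intro x y hx hy
  have hx0 : (0 : ℝ) ≤ x := by linarith
  constructor
  · unfold faxyStar faxy
    apply csSup_le_csSup
    · exact chain_len_bdd _ hx0 (fun n h => h.2.2.1)
    · exact ⟨0, [], ⟨List.nodup_nil, by simp, List.isChain_nil⟩, by simp, rfl⟩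
    · rintro L ⟨l, h1, h2, h3⟩
      exact ⟨l, h1, fun n hn => by
        obtain ⟨a, b, c, d, e⟩ := h2 n hn
        exact ⟨a, b, d, e⟩, h3⟩
  · set M := 4 ^ (S + 2) with hM
    unfold Axyz
    have hsub : {n : ℕ | 1 ≤ n ∧ (n : ℝ) ≤ x / (M : ℝ) ∧ (Pmax n : ℝ) ≤ y ∧
        (∀ p : ℕ, p.Prime → p ∣ n → (2 : ℝ) < (p : ℝ)) ∧ (SS n : ℝ) ≤ x / (M : ℝ)} ⊆
        {n | Node M ⌊x⌋₊ y n} := fun n hn => node_of_mem hM1 hx hy hn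
    have hfin : {n | Node M ⌊x⌋₊ y n}.Finite := by
      apply (Set.finite_Iic ⌊x⌋₊).subset
      intro n h
      have := h.2.2.1
      simp only [Set.mem_Iic]
      nlinarith
    refine (Set.ncard_le_ncard hsub hfin).trans ?_
    by_cases hone : Node M ⌊x⌋₊ y 1
    · obtain ⟨l, hl1, hl2, hl3, hl4⟩ := big hslots hone
      refine hl3.trans ?_
      unfold faxyStar
      apply le_csSup (chain_len_bdd _ hx0 (fun n h => h.2.2.2.1))
      have hv : ∀ n ∈ l, 1 ≤ n ∧ (SS n : ℝ) ≤ x ∧ Real.sqrt x < (n : ℝ) ∧ (n : ℝ) ≤ x ∧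
          (Pmax n : ℝ) ≤ y := by
        intro n hn
        obtain ⟨o, k, rfl, ho, h1, h2⟩ := hl4 n hn
        exact vertex_ok hM1 hx hy ho h1 h2
      exact ⟨l, ⟨hl1, fun n hn => (hv n hn).1, hl2⟩, hv, rfl⟩
    · have : {n | Node M ⌊x⌋₊ y n} = ∅ := by
        rw [Set.eq_empty_iff_forall_notMem]
        intro n hn
        exact hone (Node.of_dvd hn (one_dvd n))
      rw [this, Set.ncard_empty]
      exact Nat.zero_le _
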